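/- Assume p > 0, ρ > 0, that the Dirichlet eigenpair hypothesis holds for (Ω, λ₁, φ), that μ ≤ C_{H,Ω}, and that (q − 1)·|γ_*| > 2 (equivalently, q > 1 + 2/|γ_*|). Then the inequality (Z): −Δu − μ|x|^{−2}u ≥ (∫_{C_Ω^ρ} u(y)^p dy)·u^q has a positive solution in C_Ω^ρ if and only if p·|γ_*| > N. -/

import Mathlib

open MeasureTheory Real Set
open scoped ENNReal NNReal

noncomputable section

/-- Euclidean space `ℝ^N`. -/
abbrev Euc (N : ℕ) := EuclideanSpace ℝ (Fin N)

/-- The Euclidean Laplacian `Δu(x) = ∑ ∂²u/∂xᵢ²(x)`, the trace of the Hessian. -/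
def lap (N : ℕ) (u : Euc N → ℝ) (x : Euc N) : ℝ :=
  ∑ i : Fin N,
    iteratedFDeriv ℝ 2 u x ![EuclideanSpace.single i 1, EuclideanSpace.single i 1]

/-- The open cone `C_Ω^ρ = {x : |x| > ρ, x/|x| ∈ Ω}`. -/
def coneGT (N : ℕ) (ρ : ℝ) (Ω : Set (Euc N)) : Set (Euc N) :=
  {x | ρ < ‖x‖ ∧ ‖x‖⁻¹ • x ∈ Ω}

/-- The full open cone `C_Ω = {x ≠ 0 : x/|x| ∈ Ω}`. -/
def cone (N : ℕ) (Ω : Set (Euc N)) : Set (Euc N) :=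
  {x | x ≠ 0 ∧ ‖x‖⁻¹ • x ∈ Ω}

/-- `Ω` is a nonempty, connected, relatively open subset of the unit sphere `S^{N-1}`. -/
def IsConeDomain (N : ℕ) (Ω : Set (Euc N)) : Prop :=
  Ω ⊆ Metric.sphere (0 : Euc N) 1 ∧ IsConnected Ω ∧
    IsOpen {ω : Metric.sphere (0 : Euc N) 1 | (ω : Euc N) ∈ Ω}

/-- The convolution `(|x|^{-α} * f)(x) = ∫_{C_Ω^ρ} f(y)|x-y|^{-α} dy`, valued in `[0,∞]`. -/
def rieszConv (N : ℕ) (α ρ : ℝ) (Ω : Set (Euc N)) (f : Euc N → ℝ) (x : Euc N) : ℝ≥0∞ :=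
  ∫⁻ y in coneGT N ρ Ω, ENNReal.ofReal (f y * ‖x - y‖ ^ (-α))

/-- Dirichlet eigenpair hypothesis for `(Ω, λ₁, φ)`: `φ` is continuous on the closure of `Ω`,
positive on `Ω`, vanishing on the relative boundary, with maximum `1`, and its 0-homogeneous
extension `Φ(x) = φ(x/|x|)` is `C²` on the open cone and satisfies `ΔΦ = -λ₁|x|⁻²Φ`. -/
structure DirichletEigenpair (N : ℕ) (Ω : Set (Euc N)) (lam1 : ℝ) (φ : Euc N → ℝ) : Prop where
  contOn : ContinuousOn φ (closure Ω)
  pos : ∀ ω ∈ Ω, 0 < φ ω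
  bdryZero : ∀ ω ∈ closure Ω \ Ω, φ ω = 0
  le_one : ∀ ω ∈ closure Ω, φ ω ≤ 1
  max_one : ∃ ω ∈ closure Ω, φ ω = 1
  smoothExt : ContDiffOn ℝ 2 (fun x => φ (‖x‖⁻¹ • x)) (cone N Ω)
  eigen : ∀ x ∈ cone N Ω,
    lap N (fun y => φ (‖y‖⁻¹ • y)) x = -lam1 * ‖x‖ ^ (-(2:ℝ)) * φ (‖x‖⁻¹ • x)

/-- The Hardy constant `C_{H,Ω} = λ₁ + ((N-2)/2)²`. -/
def CHconst (N : ℕ) (lam1 : ℝ) : ℝ := lam1 + (((N : ℝ) - 2) / 2) ^ 2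

/-- The smaller root `γ_*` of `γ(γ + N - 2) = λ₁ - μ`. -/
def gammaStar (N : ℕ) (lam1 μ : ℝ) : ℝ :=
  (-((N : ℝ) - 2) - Real.sqrt (((N : ℝ) - 2) ^ 2 + 4 * (lam1 - μ))) / 2

/-- A positive (classical) solution of `(E) : -Δu - μ|x|⁻²u ≥ (|x|^{-α} * uᵖ) u^q` in `C_Ω^ρ`. -/
def IsPosSolE (N : ℕ) (ρ μ α p q : ℝ) (Ω : Set (Euc N)) (u : Euc N → ℝ) : Prop :=
  ContDiffOn ℝ 2 u (coneGT N ρ Ω) ∧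
  ContinuousOn u (closure (coneGT N ρ Ω)) ∧
  (∀ x ∈ coneGT N ρ Ω, 0 < u x) ∧
  (∀ x ∈ coneGT N ρ Ω, rieszConv N α ρ Ω (fun y => u y ^ p) x < ⊤) ∧
  (∀ x ∈ coneGT N ρ Ω,
    (rieszConv N α ρ Ω (fun y => u y ^ p) x).toReal * u x ^ q ≤
      -lap N u x - μ * ‖x‖ ^ (-(2:ℝ)) * u x)

/-- A positive solution of `(Z) : -Δu - μ|x|⁻²u ≥ (∫_{C_Ω^ρ} uᵖ) u^q` in `C_Ω^ρ`. -/
def IsPosSolZ (N : ℕ) (ρ μ p q : ℝ) (Ω : Set (Euc N)) (u : Euc N → ℝ) : Prop :=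
  ContDiffOn ℝ 2 u (coneGT N ρ Ω) ∧
  ContinuousOn u (closure (coneGT N ρ Ω)) ∧
  (∀ x ∈ coneGT N ρ Ω, 0 < u x) ∧
  (∫⁻ y in coneGT N ρ Ω, ENNReal.ofReal (u y ^ p)) < ⊤ ∧
  (∀ x ∈ coneGT N ρ Ω,
    (∫⁻ y in coneGT N ρ Ω, ENNReal.ofReal (u y ^ p)).toReal * u x ^ q ≤
      -lap N u x - μ * ‖x‖ ^ (-(2:ℝ)) * u x)

/-- A positive solution `(u, v)` of the system `(S)` in `C_Ω^ρ`. -/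
def IsPosSolS (N : ℕ) (ρ μ α p q s : ℝ) (Ω : Set (Euc N)) (u v : Euc N → ℝ) : Prop :=
  ContDiffOn ℝ 2 u (coneGT N ρ Ω) ∧ ContinuousOn u (closure (coneGT N ρ Ω)) ∧
  ContDiffOn ℝ 2 v (coneGT N ρ Ω) ∧ ContinuousOn v (closure (coneGT N ρ Ω)) ∧
  (∀ x ∈ coneGT N ρ Ω, 0 < u x) ∧ (∀ x ∈ coneGT N ρ Ω, 0 < v x) ∧
  (∀ x ∈ coneGT N ρ Ω, rieszConv N α ρ Ω (fun y => v y ^ p) x < ⊤) ∧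
  (∀ x ∈ coneGT N ρ Ω,
    (rieszConv N α ρ Ω (fun y => v y ^ p) x).toReal * v x ^ q ≤
      -lap N u x - μ * ‖x‖ ^ (-(2:ℝ)) * u x) ∧
  (∀ x ∈ coneGT N ρ Ω, u x ^ s ≤ -lap N v x - μ * ‖x‖ ^ (-(2:ℝ)) * v x)

open Filter Topology InnerProductSpace Laplacian
open scoped Gradient

/-!
Write `Φ` for the 0-homogeneous extension of `φ` and `γ` for `γ_*`, so that `‖x‖ ^ γ * Φ x` solves
the homogeneous Hardy equation.

If `u` is a positive solution, then the harmonic sum of `u` and `‖x‖ ^ γ * Φ x`, a smooth substitute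
for their minimum, is a positive supersolution of the Hardy operator. Testing it against
`‖x‖ ^ (2 - N - γ) * η (log ‖x‖) * Φ x`, with `η` a tent whose second difference isolates three
shells `log ‖x‖ ≈ t, t + L, t + 2 * L`, shows that suitably weighted integrals of the harmonic sum
over the shells at `t + L` never drop below half the integral over the shell at `t`. If
`p * |γ| ≤ N`, integrability of `u ^ p` forces these integrals to `0` as `L → ∞`.

Conversely, subtracting from `‖x‖ ^ γ * Φ x` a small multiple of a faster decaying
`‖x‖ ^ (γ - ε) * Φ x` leaves a positive remainder of order `‖x‖ ^ (γ - ε - 2)`, which dominates the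
`q`-th power exactly because `(q - 1) * |γ| > 2`, and a small multiple of this function absorbs the
factor `∫ u ^ p`.
-/

/-! ### Calculus of the Laplacian -/

lemma log_eq_log_sq_div_two (r : ℝ) : log r = log (r ^ 2) / 2 := by
  simp

lemma deriv_log_div_two : deriv (fun s => log s / 2) = fun s => s⁻¹ / 2 := by
  ext s; simp

section LaplacianCalculus

variable {E : Type*} [NormedAddCommGroup E] [InnerProductSpace ℝ E]
  {f g : E → ℝ} {x : E}

lemma eventually_differentiableAt_of_contDiffAt (hf : ContDiffAt ℝ 2 f x) :
    ∀ᶠ y in 𝓝 x, DifferentiableAt ℝ f y :=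
  (hf.eventually (by simp)).mono fun _ hy => hy.differentiableAt (by simp)

lemma hasFDerivAt_fderiv_of_contDiffAt (hf : ContDiffAt ℝ 2 f x) :
    HasFDerivAt (fderiv ℝ f) (fderiv ℝ (fderiv ℝ f) x) x :=
  ((hf.fderiv_right (m := 1) (by norm_num)).differentiableAt (by simp)).hasFDerivAt

lemma gradient_fun_comp [CompleteSpace E] {θ : ℝ → ℝ} (hθ : DifferentiableAt ℝ θ (f x))
    (hf : DifferentiableAt ℝ f x) : ∇ (fun y => θ (f y)) x = deriv θ (f x) • ∇ f x := by
  have := (hθ.hasDerivAt.comp_hasFDerivAt x hf.hasFDerivAt).fderiv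
  simp [gradient, show (fun y => θ (f y)) = θ ∘ f from rfl, this]

lemma gradient_norm_sq [CompleteSpace E] (x : E) :
    ∇ (fun y : E => ‖y‖ ^ 2) x = (2 : ℝ) • x :=
  ext_inner_right ℝ fun v => by
    simp [inner_gradient_left, (hasStrictFDerivAt_norm_sq x).hasFDerivAt.fderiv, inner_smul_left]

lemma gradient_log_norm [CompleteSpace E] (hx : x ≠ 0) :
    ∇ (fun y : E => log ‖y‖) x = (‖x‖ ^ 2)⁻¹ • x := by
  simp only [log_eq_log_sq_div_two ‖_‖]
  rw [gradient_fun_comp (θ := fun s => log s / 2)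
    ((differentiableAt_log (by positivity)).div_const 2)
    (hasStrictFDerivAt_norm_sq x).differentiableAt, gradient_norm_sq, deriv_log_div_two, smul_smul]
  ring_nf

lemma contDiffAt_log_norm {n : WithTop ℕ∞} (hx : x ≠ 0) :
    ContDiffAt ℝ n (fun y : E => log ‖y‖) x :=
  (contDiffAt_norm ℝ hx).log (norm_ne_zero_iff.2 hx)

variable [FiniteDimensional ℝ E]

lemma sum_fderiv_mul_fderiv {ι : Type*} [Fintype ι] (b : OrthonormalBasis ι ℝ E) (f g : E → ℝ)
    (x : E) : ∑ i, fderiv ℝ f x (b i) * fderiv ℝ g x (b i) = inner ℝ (∇ f x) (∇ g x) := by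
  simp only [← b.sum_inner_mul_inner (∇ f x) (∇ g x), inner_gradient_left,
    real_inner_comm (∇ g x)]

lemma laplacian_eq_sum_fderiv_fderiv {ι : Type*} [Fintype ι] (b : OrthonormalBasis ι ℝ E)
    (f : E → ℝ) (x : E) : Δ f x = ∑ i, fderiv ℝ (fderiv ℝ f) x (b i) (b i) := by
  simp [laplacian_eq_iteratedFDeriv_orthonormalBasis f b, iteratedFDeriv_two_apply]

lemma laplacian_fun_mul (hf : ContDiffAt ℝ 2 f x) (hg : ContDiffAt ℝ 2 g x) :
    Δ (fun y => f y * g y) x = f x * Δ g x + g x * Δ f x + 2 * inner ℝ (∇ f x) (∇ g x) := by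
  have first : fderiv ℝ (fun y => f y * g y) =ᶠ[𝓝 x]
      fun y => f y • fderiv ℝ g y + g y • fderiv ℝ f y := by
    filter_upwards [eventually_differentiableAt_of_contDiffAt hf,
      eventually_differentiableAt_of_contDiffAt hg] with y hfy hgy
    exact fderiv_fun_mul hfy hgy
  have df := (hf.differentiableAt (by simp)).hasFDerivAt
  have dg := (hg.differentiableAt (by simp)).hasFDerivAt
  have second := ((df.smul (hasFDerivAt_fderiv_of_contDiffAt hg)).add
    (dg.smul (hasFDerivAt_fderiv_of_contDiffAt hf))).congr_of_eventuallyEq first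
  let b := stdOrthonormalBasis ℝ E
  simp only [laplacian_eq_sum_fderiv_fderiv b, ← sum_fderiv_mul_fderiv b, second.fderiv,
    Finset.mul_sum, ← Finset.sum_add_distrib]
  refine Finset.sum_congr rfl fun i _ => ?_
  simp only [add_apply, smul_apply, ContinuousLinearMap.smulRight_apply, smul_eq_mul]
  ring

lemma laplacian_fun_comp {θ : ℝ → ℝ} (hθ : ContDiffAt ℝ 2 θ (f x)) (hf : ContDiffAt ℝ 2 f x) :
    Δ (fun y => θ (f y)) x = deriv θ (f x) * Δ f x + deriv (deriv θ) (f x) * ‖∇ f x‖ ^ 2 := by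
  have first : fderiv ℝ (fun y => θ (f y)) =ᶠ[𝓝 x] fun y => deriv θ (f y) • fderiv ℝ f y := by
    filter_upwards [eventually_differentiableAt_of_contDiffAt hf,
      hf.continuousAt.eventually (eventually_differentiableAt_of_contDiffAt hθ)] with y hfy hθy
    exact (hθy.hasDerivAt.comp_hasFDerivAt y hfy.hasFDerivAt).fderiv
  have dθ' : DifferentiableAt ℝ (deriv θ) (f x) :=
    (hθ.derivWithin (m := 1) (by norm_num)).differentiableAt (by simp)
  have df := (hf.differentiableAt (by simp)).hasFDerivAt
  have second := ((dθ'.hasDerivAt.comp_hasFDerivAt x df).smul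
    (hasFDerivAt_fderiv_of_contDiffAt hf)).congr_of_eventuallyEq first
  let b := stdOrthonormalBasis ℝ E
  rw [← real_inner_self_eq_norm_sq]
  simp only [laplacian_eq_sum_fderiv_fderiv b, ← sum_fderiv_mul_fderiv b, second.fderiv,
    Finset.mul_sum, ← Finset.sum_add_distrib]
  refine Finset.sum_congr rfl fun i _ => ?_
  simp only [Function.comp_apply, add_apply, smul_apply,
    ContinuousLinearMap.smulRight_apply, smul_eq_mul]
  ring

lemma laplacian_norm_sq (x : E) : Δ (fun y : E => ‖y‖ ^ 2) x = 2 * Module.finrank ℝ E := by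
  have second : HasFDerivAt (fderiv ℝ fun y : E => ‖y‖ ^ 2) (2 • innerSL ℝ (E := E)) x := by
    rw [fderiv_norm_sq]
    exact (2 • innerSL ℝ (E := E)).hasFDerivAt
  rw [laplacian_eq_sum_fderiv_fderiv (stdOrthonormalBasis ℝ E), second.fderiv]
  simp [innerSL_apply_apply ℝ, mul_comm]

lemma laplacian_log_norm (hx : x ≠ 0) :
    Δ (fun y : E => log ‖y‖) x = (‖x‖ ^ 2)⁻¹ * (Module.finrank ℝ E - 2) := by
  have := norm_pos_iff.2 hx
  have dθ' : deriv (fun s : ℝ => s⁻¹ / 2) (‖x‖ ^ 2) = -((‖x‖ ^ 2) ^ 2)⁻¹ / 2 := by simp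
  simp only [log_eq_log_sq_div_two ‖_‖]
  rw [laplacian_fun_comp (θ := fun s => log s / 2)
    ((contDiffAt_log.2 (by positivity)).div_const 2) (contDiff_norm_sq ℝ).contDiffAt,
    laplacian_norm_sq, gradient_norm_sq, deriv_log_div_two, dθ', norm_smul, norm_two]
  field_simp
  ring

lemma laplacian_comp_log_norm_mul {h : ℝ → ℝ} (hx : x ≠ 0) (hh : ContDiffAt ℝ 2 h (log ‖x‖))
    (hg : ContDiffAt ℝ 2 g x) (hradial : fderiv ℝ g x x = 0) :
    Δ (fun y => h (log ‖y‖) * g y) x =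
      (‖x‖ ^ 2)⁻¹ * (deriv (deriv h) (log ‖x‖) +
        (Module.finrank ℝ E - 2) * deriv h (log ‖x‖)) * g x + h (log ‖x‖) * Δ g x := by
  let L : E → ℝ := fun y => log ‖y‖
  have hL : ContDiffAt ℝ 2 L x := contDiffAt_log_norm hx
  have := norm_pos_iff.2 hx
  rw [laplacian_fun_mul (f := fun y => h (L y)) (hh.comp x hL) hg,
    laplacian_fun_comp (f := L) hh hL,
    gradient_fun_comp (f := L) (hh.differentiableAt (by simp)) (hL.differentiableAt (by simp)),
    gradient_log_norm hx, laplacian_log_norm hx, smul_smul, real_inner_smul_left,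
    real_inner_comm, inner_gradient_left, hradial, norm_smul, norm_inv, norm_pow, norm_norm]
  field_simp
  ring

end LaplacianCalculus

lemma lap_eq_laplacian {N : ℕ} (u : Euc N → ℝ) (x : Euc N) : lap N u x = Δ u x := by
  simp [lap, laplacian_eq_iteratedFDeriv_orthonormalBasis u (EuclideanSpace.basisFun (Fin N) ℝ)]

/-! ### Supersolutions of the Hardy operator -/

lemma rpow_neg_two (r : ℝ) : r ^ (-2 : ℝ) = (r ^ 2)⁻¹ := by
  simp [zpow_neg]

lemma deriv_exp_const_mul_mul {η : ℝ → ℝ} (a : ℝ) (hη : Differentiable ℝ η) :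
    deriv (fun t => exp (a * t) * η t) = fun t => exp (a * t) * (deriv η t + a * η t) := by
  ext t
  have hexp : HasDerivAt (fun t => exp (a * t)) (exp (a * t) * a) t := by
    simpa using ((hasDerivAt_id t).const_mul a).exp
  rw [(hexp.fun_mul (hη t).hasDerivAt).deriv]
  ring

section HardySupersolution

variable {E : Type*} [NormedAddCommGroup E] [InnerProductSpace ℝ E] [FiniteDimensional ℝ E]
  {g : E → ℝ} {x : E}

lemma laplacian_norm_rpow_mul_comp_log_norm_mul {η : ℝ → ℝ} (a : ℝ) (hx : x ≠ 0)
    (hη : ContDiff ℝ 2 η) (hg : ContDiffAt ℝ 2 g x) (hradial : fderiv ℝ g x x = 0) :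
    Δ (fun y => ‖y‖ ^ a * η (log ‖y‖) * g y) x =
      ‖x‖ ^ a * (‖x‖ ^ (-2 : ℝ) * (deriv (deriv η) (log ‖x‖) +
          (2 * a + Module.finrank ℝ E - 2) * deriv η (log ‖x‖) +
          a * (a + Module.finrank ℝ E - 2) * η (log ‖x‖)) * g x + η (log ‖x‖) * Δ g x) := by
  let h : ℝ → ℝ := fun t => exp (a * t) * η t
  have deriv_h : deriv h = fun t => exp (a * t) * (deriv η t + a * η t) :=
    deriv_exp_const_mul_mul a (hη.differentiable (by simp))
  have deriv_deriv_h (t : ℝ) : deriv (deriv h) t =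
      exp (a * t) * (deriv (deriv η) t + 2 * a * deriv η t + a ^ 2 * η t) := by
    have dη : Differentiable ℝ η := hη.differentiable (by simp)
    have dη' : Differentiable ℝ (deriv η) := hη.differentiable_deriv_two
    rw [deriv_h, deriv_exp_const_mul_mul a (η := fun t => deriv η t + a * η t) (by fun_prop)]
    simp only [deriv_fun_add (dη' t) ((dη t).const_mul a), deriv_const_mul_field]
    ring
  have rpow_eq {y : E} (hy : y ≠ 0) : ‖y‖ ^ a = exp (a * log ‖y‖) := by
    rw [rpow_def_of_pos (norm_pos_iff.2 hy), mul_comm]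
  have eq_h : (fun y => ‖y‖ ^ a * η (log ‖y‖) * g y) =ᶠ[𝓝 x] fun y => h (log ‖y‖) * g y := by
    filter_upwards [isOpen_ne.mem_nhds hx] with y hy
    simp only [h, rpow_eq hy]
  rw [(laplacian_congr_nhds eq_h).self_of_nhds,
    laplacian_comp_log_norm_mul hx (by fun_prop) hg hradial, deriv_deriv_h, deriv_h,
    rpow_neg_two, rpow_eq hx]
  simp only [h]
  ring

lemma laplacian_norm_rpow_mul (a : ℝ) (hx : x ≠ 0) (hg : ContDiffAt ℝ 2 g x)
    (hradial : fderiv ℝ g x x = 0) :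
    Δ (fun y => ‖y‖ ^ a * g y) x = ‖x‖ ^ a *
      (‖x‖ ^ (-2 : ℝ) * (a * (a + Module.finrank ℝ E - 2)) * g x + Δ g x) := by
  simpa using laplacian_norm_rpow_mul_comp_log_norm_mul (η := fun _ => 1) a hx contDiff_const hg
    hradial

lemma norm_add_sq_div_add_le {F : Type*} [SeminormedAddCommGroup F] {s t : ℝ} (hs : 0 < s)
    (ht : 0 < t) (a b : F) : ‖a + b‖ ^ 2 / (s + t) ≤ ‖a‖ ^ 2 / s + ‖b‖ ^ 2 / t := by
  calc ‖a + b‖ ^ 2 / (s + t) ≤ (‖a‖ + ‖b‖) ^ 2 / (s + t) := by gcongr; exact norm_add_le a b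
    _ ≤ ‖a‖ ^ 2 / s + ‖b‖ ^ 2 / t := by
      rw [div_add_div _ _ hs.ne' ht.ne', div_le_div_iff₀ (by positivity) (by positivity)]
      nlinarith [sq_nonneg (t * ‖a‖ - s * ‖b‖)]

lemma laplacian_inv_add_mul_inv_nonpos_iff {w : E → ℝ} (k : ℝ) (hw : ContDiffAt ℝ 2 w x)
    (pos : 0 < w x) : Δ (fun y => (w y)⁻¹) x + k * (w x)⁻¹ ≤ 0 ↔
      k * w x + 2 * (‖∇ w x‖ ^ 2 / w x) ≤ Δ w x := by
  have deriv2 : deriv (deriv fun s : ℝ => s⁻¹) (w x) = 2 * (w x ^ 3)⁻¹ := by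
    change deriv^[2] Inv.inv (w x) = _
    rw [iter_deriv_inv]
    norm_num [zpow_neg]
  have key : Δ (fun y => (w y)⁻¹) x + k * (w x)⁻¹ =
      (w x ^ 2)⁻¹ * (k * w x + 2 * (‖∇ w x‖ ^ 2 / w x) - Δ w x) := by
    rw [laplacian_fun_comp (θ := fun s => s⁻¹) (contDiffAt_inv ℝ pos.ne') hw, deriv2, deriv_inv]
    field_simp
    ring
  rw [key, ← smul_eq_mul, smul_nonpos_iff_nonpos_of_pos_left (by positivity), sub_nonpos]

/-- Classical supersolutions of the Hardy operator `-Δ - μ|x|⁻²` on a set `U`. -/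
structure IsHardySupersolution (μ : ℝ) (U : Set E) (v : E → ℝ) : Prop where
  contDiffOn : ContDiffOn ℝ 2 v U
  laplacian_nonpos : ∀ x ∈ U, Δ v x + μ * ‖x‖ ^ (-2 : ℝ) * v x ≤ 0

/-- For `w > 0` the inequality `k * w + 2 * (‖∇ w‖ ^ 2 / w) ≤ Δ w` says that `w⁻¹` is a
supersolution of `-Δ - k`, so that harmonic sums of supersolutions are supersolutions. -/
lemma add_two_mul_norm_gradient_sq_div_le_laplacian_add {v w : E → ℝ} {k : ℝ}
    (hv : ContDiffAt ℝ 2 v x) (hw : ContDiffAt ℝ 2 w x) (hv0 : 0 < v x) (hw0 : 0 < w x)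
    (lv : k * v x + 2 * (‖∇ v x‖ ^ 2 / v x) ≤ Δ v x)
    (lw : k * w x + 2 * (‖∇ w x‖ ^ 2 / w x) ≤ Δ w x) :
    k * (v x + w x) + 2 * (‖∇ (v + w) x‖ ^ 2 / (v x + w x)) ≤ Δ (v + w) x := by
  have gradient_add : ∇ (v + w) x = ∇ v x + ∇ w x := by
    simp only [gradient, ← map_add,
      fderiv_add (hv.differentiableAt (by simp)) (hw.differentiableAt (by simp))]
  rw [gradient_add, hv.laplacian_add hw]
  linarith [norm_add_sq_div_add_le hv0 hw0 (∇ v x) (∇ w x)]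

lemma IsHardySupersolution.inv_add_inv {μ : ℝ} {U : Set E} {u v : E → ℝ} (hU : IsOpen U)
    (hu : IsHardySupersolution μ U u) (hv : IsHardySupersolution μ U v)
    (hu0 : ∀ x ∈ U, 0 < u x) (hv0 : ∀ x ∈ U, 0 < v x) :
    IsHardySupersolution μ U (u⁻¹ + v⁻¹)⁻¹ := by
  have pos {w : E → ℝ} (hw0 : ∀ x ∈ U, 0 < w x) {x} (hx : x ∈ U) : 0 < w⁻¹ x :=
    inv_pos.2 (hw0 x hx)
  have contDiff_inv {w : E → ℝ} (hw : IsHardySupersolution μ U w) (hw0 : ∀ x ∈ U, 0 < w x) :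
      ContDiffOn ℝ 2 w⁻¹ U := hw.contDiffOn.inv fun x hx => (hw0 x hx).ne'
  have laplacian_inv {w : E → ℝ} (hw : IsHardySupersolution μ U w) (hw0 : ∀ x ∈ U, 0 < w x) {x}
      (hx : x ∈ U) := (laplacian_inv_add_mul_inv_nonpos_iff (μ * ‖x‖ ^ (-2 : ℝ))
        ((contDiff_inv hw hw0).contDiffAt (hU.mem_nhds hx)) (pos hw0 hx)).1
        (by simpa only [Pi.inv_apply, inv_inv] using hw.laplacian_nonpos x hx)
  have sum_pos {x} (hx : x ∈ U) : 0 < (u⁻¹ + v⁻¹) x := add_pos (pos hu0 hx) (pos hv0 hx)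
  have cu := contDiff_inv hu hu0
  have cv := contDiff_inv hv hv0
  refine ⟨(cu.add cv).inv fun x hx => (sum_pos hx).ne', fun x hx => ?_⟩
  have cu_x := cu.contDiffAt (hU.mem_nhds hx)
  have cv_x := cv.contDiffAt (hU.mem_nhds hx)
  exact (laplacian_inv_add_mul_inv_nonpos_iff _ (cu_x.add cv_x) (sum_pos hx)).2
    (add_two_mul_norm_gradient_sq_div_le_laplacian_add cu_x cv_x (pos hu0 hx) (pos hv0 hx)
      (laplacian_inv hu hu0 hx) (laplacian_inv hv hv0 hx))

end HardySupersolution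

/-! ### Green's identity -/

lemma contDiff_of_contDiffAt_tsupport {E : Type*} [NormedAddCommGroup E] [NormedSpace ℝ E]
    {f : E → ℝ} {n : WithTop ℕ∞} (hf : ∀ x ∈ tsupport f, ContDiffAt ℝ n f x) :
    ContDiff ℝ n f :=
  contMDiff_iff_contDiff.1 (contMDiff_of_tsupport fun x hx => (hf x hx).contMDiffAt)

section Green

variable {E : Type*} [NormedAddCommGroup E] [InnerProductSpace ℝ E]

lemma fderiv_mul_fderiv_sub_mul_fderiv_apply {v ζ : E → ℝ} {x : E} (hv : ContDiffAt ℝ 2 v x)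
    (hζ : ContDiffAt ℝ 2 ζ x) (e : E) :
    fderiv ℝ (fun y => ζ y * fderiv ℝ v y e - v y * fderiv ℝ ζ y e) x e =
      ζ x * fderiv ℝ (fderiv ℝ v) x e e - v x * fderiv ℝ (fderiv ℝ ζ) x e e := by
  have dζ := (hζ.differentiableAt (by simp)).hasFDerivAt
  have dv := (hv.differentiableAt (by simp)).hasFDerivAt
  have dv_e := (hasFDerivAt_fderiv_of_contDiffAt hv).clm_apply (hasFDerivAt_const e x)
  have dζ_e := (hasFDerivAt_fderiv_of_contDiffAt hζ).clm_apply (hasFDerivAt_const e x)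
  rw [((dζ.fun_mul dv_e).fun_sub (dv.fun_mul dζ_e)).fderiv]
  simp
  ring

lemma tsupport_mul_fderiv_sub_mul_fderiv_subset (v ζ : E → ℝ) (e : E) :
    tsupport (fun y => ζ y * fderiv ℝ v y e - v y * fderiv ℝ ζ y e) ⊆ tsupport ζ := by
  refine closure_minimal (fun x hx => ?_) (isClosed_tsupport ζ)
  by_contra hxζ
  have hζ0 : ζ =ᶠ[𝓝 x] 0 := notMem_tsupport_iff_eventuallyEq.1 hxζ
  simp [hζ0.self_of_nhds, hζ0.fderiv_eq] at hx

lemma contDiff_mul_fderiv_sub_mul_fderiv {v ζ : E → ℝ} {U : Set E} (hU : IsOpen U)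
    (hv : ContDiffOn ℝ 2 v U) (hζ : ContDiff ℝ 2 ζ) (hζU : tsupport ζ ⊆ U) (e : E) :
    ContDiff ℝ 1 fun y => ζ y * fderiv ℝ v y e - v y * fderiv ℝ ζ y e := by
  refine contDiff_of_contDiffAt_tsupport fun x hx => ?_
  have hv_x := hv.contDiffAt
    (hU.mem_nhds (hζU (tsupport_mul_fderiv_sub_mul_fderiv_subset v ζ e hx)))
  have hv' : ContDiffAt ℝ 1 (fderiv ℝ v) x := hv_x.fderiv_right (by norm_num)
  have hζ' : ContDiffAt ℝ 1 (fderiv ℝ ζ) x := hζ.contDiffAt.fderiv_right (by norm_num)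
  exact ((hζ.contDiffAt.of_le (by norm_num)).mul (hv'.clm_apply contDiffAt_const)).sub
    ((hv_x.of_le (by norm_num)).mul (hζ'.clm_apply contDiffAt_const))

variable [FiniteDimensional ℝ E]

lemma sum_fderiv_mul_fderiv_sub_mul_fderiv {ι : Type*} [Fintype ι] (b : OrthonormalBasis ι ℝ E)
    {v ζ : E → ℝ} {U : Set E} (hU : IsOpen U) (hv : ContDiffOn ℝ 2 v U) (hζ : ContDiff ℝ 2 ζ)
    (hζU : tsupport ζ ⊆ U) (x : E) :
    ∑ i, fderiv ℝ (fun y => ζ y * fderiv ℝ v y (b i) - v y * fderiv ℝ ζ y (b i)) x (b i) =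
      ζ x * Δ v x - v x * Δ ζ x := by
  by_cases hx : x ∈ tsupport ζ
  · have hv_x := hv.contDiffAt (hU.mem_nhds (hζU hx))
    simp only [fderiv_mul_fderiv_sub_mul_fderiv_apply hv_x hζ.contDiffAt,
      laplacian_eq_sum_fderiv_fderiv b, Finset.sum_sub_distrib, Finset.mul_sum]
  · have hζ0 : ζ =ᶠ[𝓝 x] 0 := notMem_tsupport_iff_eventuallyEq.1 hx
    have hX0 (e : E) : (fun y => ζ y * fderiv ℝ v y e - v y * fderiv ℝ ζ y e) =ᶠ[𝓝 x] 0 := by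
      filter_upwards [hζ0, hζ0.fderiv (𝕜 := ℝ)] with y hy hy'
      simp [hy, hy']
    simp [(hX0 _).fderiv_eq, (laplacian_congr_nhds hζ0).self_of_nhds, hζ0.self_of_nhds,
      laplacian_eq_sum_fderiv_fderiv b]

variable [MeasurableSpace E] [BorelSpace E]

lemma integrable_fderiv_apply {X : E → ℝ} (hX : ContDiff ℝ 1 X) (hXc : HasCompactSupport X)
    (e : E) : Integrable fun x => fderiv ℝ X x e :=
  ((hX.continuous_fderiv one_ne_zero).clm_apply continuous_const).integrable_of_hasCompactSupport
    (hXc.fderiv_apply (𝕜 := ℝ) e)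

lemma integral_fderiv_apply_eq_zero {X : E → ℝ} (hX : ContDiff ℝ 1 X)
    (hXc : HasCompactSupport X) (e : E) : ∫ x, fderiv ℝ X x e = 0 := by
  simpa using integral_mul_fderiv_eq_neg_fderiv_mul_of_integrable (μ := volume) (v := e)
    (f := fun _ : E => (1 : ℝ)) (g := X) (by simp) (by simpa using integrable_fderiv_apply hX hXc e)
    (by simpa using hX.continuous.integrable_of_hasCompactSupport hXc) (by fun_prop)
    fun x _ => hX.differentiable one_ne_zero x

lemma integrable_and_integral_mul_laplacian_sub_eq_zero {v ζ : E → ℝ} {U : Set E} (hU : IsOpen U)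
    (hv : ContDiffOn ℝ 2 v U) (hζ : ContDiff ℝ 2 ζ) (hζc : HasCompactSupport ζ)
    (hζU : tsupport ζ ⊆ U) :
    Integrable (fun x => ζ x * Δ v x - v x * Δ ζ x) ∧
      ∫ x, ζ x * Δ v x - v x * Δ ζ x = 0 := by
  let b := stdOrthonormalBasis ℝ E
  have hX (e : E) := contDiff_mul_fderiv_sub_mul_fderiv hU hv hζ hζU e
  have hXc (e : E) : HasCompactSupport fun y => ζ y * fderiv ℝ v y e - v y * fderiv ℝ ζ y e :=
    hζc.of_isClosed_subset (isClosed_tsupport _) (tsupport_mul_fderiv_sub_mul_fderiv_subset v ζ e)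
  simp only [← sum_fderiv_mul_fderiv_sub_mul_fderiv b hU hv hζ hζU]
  have integrable (i) := integrable_fderiv_apply (hX (b i)) (hXc (b i)) (b i)
  refine ⟨integrable_finsetSum _ fun i _ => integrable i, ?_⟩
  rw [integral_finsetSum _ fun i _ => integrable i]
  exact Finset.sum_eq_zero fun i _ => integral_fderiv_apply_eq_zero (hX _) (hXc _) _

lemma IsHardySupersolution.setIntegral_nonpos_of_le {μ : ℝ} {U K : Set E} {v ζ G : E → ℝ}
    (hv : IsHardySupersolution μ U v) (hU : IsOpen U) (hK : IsCompact K) (hKU : K ⊆ U)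
    (hζ : ContDiffOn ℝ 2 ζ U) (hζ0 : ∀ x ∈ U, 0 ≤ ζ x) (hζK : ∀ x ∈ U \ K, ζ x = 0)
    (hG : IntegrableOn G U)
    (hle : ∀ x ∈ U, G x ≤ v x * (Δ ζ x + μ * ‖x‖ ^ (-2 : ℝ) * ζ x)) :
    ∫ x in U, G x ≤ 0 := by
  let Z : E → ℝ := U.indicator ζ
  have hZ_eq (x) (hx : x ∈ U) : Z =ᶠ[𝓝 x] ζ :=
    (eqOn_indicator (s := U) (f := ζ)).eventuallyEq_of_mem (hU.mem_nhds hx)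
  have hZK : tsupport Z ⊆ K := by
    refine closure_minimal (fun x hx => ?_) hK.isClosed
    have hxU : x ∈ U := mem_of_indicator_ne_zero hx
    by_contra hxK
    exact hx ((indicator_of_mem hxU ζ).trans (hζK x ⟨hxU, hxK⟩))
  have hZ : ContDiff ℝ 2 Z := contDiff_of_contDiffAt_tsupport fun x hx =>
    (hζ.contDiffAt (hU.mem_nhds (hKU (hZK hx)))).congr_of_eventuallyEq (hZ_eq x (hKU (hZK hx)))
  obtain ⟨integrable, integral_eq⟩ := integrable_and_integral_mul_laplacian_sub_eq_zero hU
    hv.contDiffOn hZ (hK.of_isClosed_subset (isClosed_tsupport Z) hZK) (hZK.trans hKU)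
  have vanish (x) (hx : x ∉ U) : Z x * Δ v x - v x * Δ Z x = 0 := by
    have hZ0 : Z =ᶠ[𝓝 x] 0 := notMem_tsupport_iff_eventuallyEq.1 fun h => hx (hKU (hZK h))
    simp [(laplacian_congr_nhds hZ0).self_of_nhds, hZ0.self_of_nhds,
      laplacian_eq_sum_fderiv_fderiv (stdOrthonormalBasis ℝ E)]
  calc ∫ x in U, G x ≤ ∫ x in U, -(Z x * Δ v x - v x * Δ Z x) := by
        refine setIntegral_mono_on hG integrable.neg.integrableOn hU.measurableSet fun x hx => ?_
        rw [(hZ_eq x hx).self_of_nhds, (laplacian_congr_nhds (hZ_eq x hx)).self_of_nhds]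
        linarith [hle x hx, mul_nonpos_of_nonneg_of_nonpos (hζ0 x hx) (hv.laplacian_nonpos x hx)]
    _ = 0 := by
        rw [integral_neg, setIntegral_eq_integral_of_forall_compl_eq_zero vanish, integral_eq,
          neg_zero]

end Green

/-! ### Cutoffs and tent profiles on the line -/

/-- A smooth convex function that vanishes on `(-∞, s]` and stays within `2 * s` of the identity
on `[0, ∞)`. Composed with the angular profile `Φ` of a cone, it produces test functions that vanish
near the lateral boundary. -/
def convexCutoff (s x : ℝ) : ℝ := (x - s) * expNegInvGlue ((x - s) / s)

lemma hasDerivAt_expNegInvGlue (y : ℝ) :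
    HasDerivAt expNegInvGlue (y⁻¹ ^ 2 * expNegInvGlue y) y := by
  simpa using expNegInvGlue.hasDerivAt_polynomial_eval_inv_mul 1 y

lemma hasDerivAt_inv_mul_expNegInvGlue (y : ℝ) :
    HasDerivAt (fun y => y⁻¹ * expNegInvGlue y) ((y⁻¹ - 1) * y⁻¹ ^ 2 * expNegInvGlue y) y := by
  simpa [mul_comm] using expNegInvGlue.hasDerivAt_polynomial_eval_inv_mul Polynomial.X y

lemma contDiff_convexCutoff (s : ℝ) : ContDiff ℝ 2 (convexCutoff s) :=
  (contDiff_id.sub contDiff_const).mul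
    (expNegInvGlue.contDiff.comp ((contDiff_id.sub contDiff_const).div_const s))

lemma convexCutoff_of_le {s x : ℝ} (hs : 0 < s) (hx : x ≤ s) : convexCutoff s x = 0 := by
  rw [convexCutoff, expNegInvGlue.zero_of_nonpos
    (div_nonpos_of_nonpos_of_nonneg (sub_nonpos.2 hx) hs.le), mul_zero]

lemma convexCutoff_nonneg {s : ℝ} (hs : 0 < s) (x : ℝ) : 0 ≤ convexCutoff s x := by
  rcases le_total x s with hx | hx
  · exact (convexCutoff_of_le hs hx).ge
  · exact mul_nonneg (sub_nonneg.2 hx) (expNegInvGlue.nonneg _)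

lemma deriv_convexCutoff (s : ℝ) :
    deriv (convexCutoff s) =
      fun x => (1 + ((x - s) / s)⁻¹) * expNegInvGlue ((x - s) / s) := by
  funext x
  have hy : HasDerivAt (fun x => (x - s) / s) (1 / s) x :=
    ((hasDerivAt_id' x).sub_const s).div_const s
  have h := ((hasDerivAt_id' x).sub_const s).fun_mul ((hasDerivAt_expNegInvGlue _).comp x hy)
  refine h.deriv.trans ?_
  rcases eq_or_ne (x - s) 0 with h0 | h0
  · simp [h0]
  · simp only [Function.comp_apply]
    field_simp

lemma deriv_deriv_convexCutoff_nonneg {s : ℝ} (hs : 0 < s) (x : ℝ) :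
    0 ≤ deriv (deriv (convexCutoff s)) x := by
  rw [deriv_convexCutoff]
  have hy : HasDerivAt (fun x => (x - s) / s) (1 / s) x :=
    ((hasDerivAt_id' x).sub_const s).div_const s
  have h := ((hasDerivAt_expNegInvGlue _).fun_add (hasDerivAt_inv_mul_expNegInvGlue _)).comp x hy
  have hderiv : deriv (fun x => (1 + ((x - s) / s)⁻¹) * expNegInvGlue ((x - s) / s)) x =
      ((x - s) / s)⁻¹ ^ 3 * expNegInvGlue ((x - s) / s) / s := by
    refine (h.congr_of_eventuallyEq (.of_forall fun x => ?_)).deriv.trans ?_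
    · simp only [Function.comp_apply]; ring
    · ring
  rw [hderiv]
  rcases le_total x s with hx | hx
  · simp [expNegInvGlue.zero_of_nonpos
      (div_nonpos_of_nonpos_of_nonneg (sub_nonpos.2 hx) hs.le)]
  · have := sub_nonneg.2 hx
    have := expNegInvGlue.nonneg ((x - s) / s)
    positivity

lemma expNegInvGlue_le_one (y : ℝ) : expNegInvGlue y ≤ 1 := by
  rcases le_or_gt y 0 with hy | hy
  · simp [expNegInvGlue.zero_of_nonpos hy]
  · simp [expNegInvGlue, hy.not_ge, hy.le]

lemma one_sub_inv_le_expNegInvGlue {y : ℝ} (hy : 0 < y) : 1 - y⁻¹ ≤ expNegInvGlue y := by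
  have := add_one_le_exp (-y⁻¹)
  simp only [expNegInvGlue, hy.not_ge, if_false]
  linarith

lemma two_add_inv_mul_expNegInvGlue_le {y : ℝ} (hy : 0 < y) :
    (2 + y⁻¹) * expNegInvGlue y ≤ 2 := by
  have h := add_one_le_exp y⁻¹
  have hinv : 0 < y⁻¹ := inv_pos.2 hy
  simp only [expNegInvGlue, hy.not_ge, if_false]
  rw [exp_neg, ← div_eq_mul_inv, div_le_iff₀ (exp_pos _)]
  linarith

lemma abs_convexCutoff_sub_self_le {s x : ℝ} (hs : 0 < s) (hx : 0 ≤ x) :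
    |convexCutoff s x - x| ≤ 2 * s := by
  rcases le_or_gt x s with hxs | hxs
  · rw [convexCutoff_of_le hs hxs, zero_sub, abs_neg, abs_of_nonneg hx]
    linarith
  · have hpos : 0 < x - s := sub_pos.2 hxs
    have hle := mul_le_of_le_one_right hpos.le (expNegInvGlue_le_one ((x - s) / s))
    have hge := mul_le_mul_of_nonneg_left
      (one_sub_inv_le_expNegInvGlue (div_pos hpos hs)) hpos.le
    rw [inv_div, mul_sub, mul_one, mul_div_cancel₀ _ hpos.ne'] at hge
    rw [convexCutoff, abs_le]
    constructor <;> linarith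

lemma abs_mul_deriv_convexCutoff_sub_le {s : ℝ} (hs : 0 < s) (x : ℝ) :
    |x * deriv (convexCutoff s) x - convexCutoff s x| ≤ 2 * s := by
  simp only [deriv_convexCutoff]
  rcases le_or_gt x s with hxs | hxs
  · rw [convexCutoff_of_le hs hxs, expNegInvGlue.zero_of_nonpos
      (div_nonpos_of_nonpos_of_nonneg (sub_nonpos.2 hxs) hs.le)]
    simp [hs.le]
  · have hy : 0 < (x - s) / s := div_pos (sub_pos.2 hxs) hs
    have heq : x * ((1 + ((x - s) / s)⁻¹) * expNegInvGlue ((x - s) / s)) - convexCutoff s x =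
        s * ((2 + ((x - s) / s)⁻¹) * expNegInvGlue ((x - s) / s)) := by
      have hpos : x - s ≠ 0 := (sub_pos.2 hxs).ne'
      rw [convexCutoff]
      field_simp
      ring
    rw [heq, abs_of_nonneg (by have := expNegInvGlue.nonneg ((x - s) / s); positivity), mul_comm]
    exact mul_le_mul_of_nonneg_right (two_add_inv_mul_expNegInvGlue_le hy) hs.le

/-- The moving integral `t ↦ ∫ s in (t - L)..t, g s`, a one-sided mollification of `g`. -/
def movingIntegral (L : ℝ) (g : ℝ → ℝ) (t : ℝ) : ℝ := ∫ s in (t - L)..t, g s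

section movingIntegral

variable {g : ℝ → ℝ} {L : ℝ}

lemma hasDerivAt_movingIntegral (hg : Continuous g) (t : ℝ) :
    HasDerivAt (movingIntegral L g) (g t - g (t - L)) t := by
  have hsub : movingIntegral L g = fun t => (∫ s in 0..t, g s) - ∫ s in 0..(t - L), g s := by
    funext t
    exact (intervalIntegral.integral_interval_sub_left (hg.intervalIntegrable _ _)
      (hg.intervalIntegrable _ _)).symm
  rw [hsub]
  exact (hg.integral_hasStrictDerivAt 0 t).hasDerivAt.sub
    ((hg.integral_hasStrictDerivAt 0 (t - L)).hasDerivAt.comp_sub_const t L)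

lemma contDiff_movingIntegral {n : ℕ} (hg : ContDiff ℝ n g) :
    ContDiff ℝ (n + 1) (movingIntegral L g) := by
  have hderiv := hasDerivAt_movingIntegral (L := L) hg.continuous
  rw [contDiff_succ_iff_deriv, funext fun t => (hderiv t).deriv]
  exact ⟨fun t => (hderiv t).differentiableAt, by simp,
    hg.sub (hg.comp (contDiff_id.sub contDiff_const))⟩

lemma movingIntegral_nonneg (hL : 0 ≤ L) (hg : ∀ t, 0 ≤ g t) (t : ℝ) : 0 ≤ movingIntegral L g t :=
  intervalIntegral.integral_nonneg_of_forall (sub_le_self t hL) hg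

lemma movingIntegral_eq_zero (hL : 0 ≤ L) {a b : ℝ} (hg : ∀ t ∉ Icc a b, g t = 0) {t : ℝ}
    (ht : t ∉ Icc a (b + L)) : movingIntegral L g t = 0 := by
  refine (intervalIntegral.integral_congr (g := fun _ => 0) fun s hs => hg s fun hab => ht ?_).trans
    intervalIntegral.integral_zero
  rw [uIcc_of_le (sub_le_self t hL)] at hs
  exact ⟨hab.1.trans hs.2, by linarith [hs.1, hab.2]⟩

end movingIntegral

/-- A compactly supported `η ≥ 0` for which `η'' + A * η'` is the combination
`ψ - (1 + exp (-A * L)) * ψ (· - L) + exp (-A * L) * ψ (· - 2 * L)` of translates of `ψ`,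
in other words a second difference adapted to the operator `η ↦ η'' + A * η'`. -/
def tentProfile (A L : ℝ) (ψ : ℝ → ℝ) : ℝ → ℝ :=
  movingIntegral L fun t => exp (-A * t) * movingIntegral L (fun s => exp (A * s) * ψ s) t

section tentProfile

variable {A L : ℝ} {ψ : ℝ → ℝ}

lemma contDiff_tentProfile (hψ : Continuous ψ) : ContDiff ℝ 2 (tentProfile A L ψ) := by
  have hinner : ContDiff ℝ ((0 : ℕ) + 1) (movingIntegral L fun s => exp (A * s) * ψ s) :=
    contDiff_movingIntegral (contDiff_zero.2 (by fun_prop))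
  have houter : ContDiff ℝ ((1 : ℕ) + 1) (tentProfile A L ψ) := by
    refine contDiff_movingIntegral (ContDiff.mul (by fun_prop) ?_)
    simpa using hinner
  simpa [one_add_one_eq_two] using houter

lemma tentProfile_nonneg (hL : 0 ≤ L) (hψ : ∀ t, 0 ≤ ψ t) (t : ℝ) : 0 ≤ tentProfile A L ψ t :=
  movingIntegral_nonneg hL (fun t => mul_nonneg (exp_pos _).le
    (movingIntegral_nonneg hL (fun s => mul_nonneg (exp_pos _).le (hψ s)) t)) t

lemma tentProfile_eq_zero (hL : 0 ≤ L) {a b : ℝ} (hψ : ∀ t ∉ Icc a b, ψ t = 0) {t : ℝ}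
    (ht : t ∉ Icc a (b + L + L)) : tentProfile A L ψ t = 0 :=
  movingIntegral_eq_zero hL (fun s hs => by
    rw [movingIntegral_eq_zero hL (fun r hr => by rw [hψ r hr, mul_zero]) hs, mul_zero]) ht

lemma deriv_tentProfile (hψ : Continuous ψ) :
    deriv (tentProfile A L ψ) = fun t =>
      exp (-A * t) * (movingIntegral L (fun s => exp (A * s) * ψ s) t -
        exp (A * L) * movingIntegral L (fun s => exp (A * s) * ψ s) (t - L)) := by
  have hinner : Continuous (movingIntegral L fun s => exp (A * s) * ψ s) :=
    continuous_iff_continuousAt.2 fun t =>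
      (hasDerivAt_movingIntegral (by fun_prop) t).continuousAt
  funext t
  refine (hasDerivAt_movingIntegral (by fun_prop) t).deriv.trans ?_
  rw [show -A * (t - L) = -A * t + A * L by ring, exp_add]
  ring

lemma deriv_deriv_tentProfile_add (hψ : Continuous ψ) (t : ℝ) :
    deriv (deriv (tentProfile A L ψ)) t + A * deriv (tentProfile A L ψ) t =
      ψ t - (1 + exp (-A * L)) * ψ (t - L) + exp (-A * L) * ψ (t - L - L) := by
  have hinner : ∀ t, HasDerivAt (movingIntegral L fun s => exp (A * s) * ψ s)
      (exp (A * t) * ψ t - exp (A * (t - L)) * ψ (t - L)) t :=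
    hasDerivAt_movingIntegral (by fun_prop)
  have hexp : HasDerivAt (fun t => exp (-A * t)) (exp (-A * t) * (-A * 1)) t :=
    ((hasDerivAt_id' t).const_mul (-A)).exp
  have hderiv := hexp.fun_mul ((hinner t).fun_sub
    (((hinner (t - L)).comp_sub_const t L).const_mul (exp (A * L))))
  simp only [deriv_tentProfile hψ, hderiv.deriv]
  have hL : exp (A * (t - L)) = exp (A * t) * exp (-A * L) := by rw [← exp_add]; ring_nf
  have hLL : exp (A * (t - L - L)) = exp (A * t) * exp (-A * L) * exp (-A * L) := by
    rw [← exp_add, ← exp_add]; ring_nf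
  have hcancel : exp (-A * t) * exp (A * t) = 1 := by rw [← exp_add]; simp
  have hcancel_L : exp (A * L) * exp (-A * L) = 1 := by rw [← exp_add]; simp
  rw [hL, hLL]
  linear_combination (ψ t - exp (-A * L) * ψ (t - L) - exp (A * L) * exp (-A * L) * ψ (t - L) +
    exp (A * L) * exp (-A * L) * exp (-A * L) * ψ (t - L - L)) * hcancel +
    (exp (-A * L) * ψ (t - L - L) - ψ (t - L)) * hcancel_L

end tentProfile

/-! ### Cones and homogeneous solutions -/

/-- The 0-homogeneous extension `Φ(x) = φ(x/|x|)` of a function `φ` on the unit sphere; its value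
at the origin is the junk value `φ 0`. -/
def homogeneousExtension {E : Type*} [NormedAddCommGroup E] [NormedSpace ℝ E] (φ : E → ℝ) (x : E) :
    ℝ :=
  φ (‖x‖⁻¹ • x)

lemma homogeneousExtension_smul {E : Type*} [NormedAddCommGroup E] [NormedSpace ℝ E] (φ : E → ℝ)
    {t : ℝ} (ht : 0 < t) (x : E) :
    homogeneousExtension φ (t • x) = homogeneousExtension φ x := by
  rw [homogeneousExtension, homogeneousExtension, norm_smul, norm_of_nonneg ht.le, smul_smul,
    mul_inv, mul_right_comm, inv_mul_cancel₀ ht.ne', one_mul]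

lemma fderiv_homogeneousExtension_self {E : Type*} [NormedAddCommGroup E] [NormedSpace ℝ E]
    (φ : E → ℝ) (x : E) : fderiv ℝ (homogeneousExtension φ) x x = 0 := by
  by_cases hd : DifferentiableAt ℝ (homogeneousExtension φ) x
  · have hray : HasDerivAt (fun t : ℝ => t • x) x 1 := by
      simpa using (hasDerivAt_id (1 : ℝ)).smul_const x
    have hcomp := hd.hasFDerivAt.comp_hasDerivAt_of_eq 1 hray (one_smul ℝ x).symm
    have hconst : homogeneousExtension φ ∘ (fun t : ℝ => t • x) =ᶠ[𝓝 1]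
        fun _ => homogeneousExtension φ x := by
      filter_upwards [lt_mem_nhds one_pos] with t ht
      exact homogeneousExtension_smul φ ht x
    exact hcomp.unique ((hasDerivAt_const 1 _).congr_of_eventuallyEq hconst)
  · rw [fderiv_zero_of_not_differentiableAt hd, zero_apply]

section cone

variable {N : ℕ} {Ω : Set (Euc N)} {ρ : ℝ}

lemma isOpen_cone (hΩ : IsOpen {ω : Metric.sphere (0 : Euc N) 1 | (ω : Euc N) ∈ Ω}) :
    IsOpen (cone N Ω) := by
  have hcont : Continuous fun x : {x : Euc N // x ≠ 0} =>
      (⟨‖(x : Euc N)‖⁻¹ • (x : Euc N), by simp [norm_smul, x.2]⟩ : Metric.sphere (0 : Euc N) 1) :=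
    Continuous.subtype_mk ((continuous_subtype_val.norm.inv₀ fun x => norm_ne_zero_iff.2 x.2).smul
      continuous_subtype_val) _
  convert isOpen_ne.isOpenMap_subtype_val _ (hΩ.preimage hcont) using 1
  ext x
  simp [cone, and_comm]

lemma norm_pos_of_mem_cone {x : Euc N} (hx : x ∈ cone N Ω) : 0 < ‖x‖ := norm_pos_iff.2 hx.1

lemma coneGT_subset_cone (hρ : 0 ≤ ρ) : coneGT N ρ Ω ⊆ cone N Ω :=
  fun _ hx => ⟨norm_pos_iff.1 (hρ.trans_lt hx.1), hx.2⟩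

lemma isOpen_coneGT (hΩ : IsOpen {ω : Metric.sphere (0 : Euc N) 1 | (ω : Euc N) ∈ Ω})
    (hρ : 0 ≤ ρ) : IsOpen (coneGT N ρ Ω) := by
  have heq : coneGT N ρ Ω = {x | ρ < ‖x‖} ∩ cone N Ω :=
    Subset.antisymm (fun x hx => ⟨hx.1, coneGT_subset_cone hρ hx⟩) fun x hx => ⟨hx.1, hx.2.2⟩
  rw [heq]
  exact (isOpen_lt continuous_const continuous_norm).inter (isOpen_cone hΩ)

lemma smul_mem_coneGT (hΩ : Ω ⊆ Metric.sphere (0 : Euc N) 1) {ω : Euc N} (hω : ω ∈ Ω) {r : ℝ}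
    (hr : 0 < r) (hρr : ρ < r) : r • ω ∈ coneGT N ρ Ω := by
  have hnorm : ‖r • ω‖ = r := by
    rw [norm_smul, mem_sphere_zero_iff_norm.1 (hΩ hω), mul_one, norm_of_nonneg hr.le]
  refine ⟨by rwa [hnorm], ?_⟩
  rwa [hnorm, smul_smul, inv_mul_cancel₀ hr.ne', one_smul]

lemma continuousAt_normalize {x : Euc N} (hx : x ≠ 0) :
    ContinuousAt (fun y : Euc N => ‖y‖⁻¹ • y) x :=
  (continuousAt_id.norm.inv₀ (norm_ne_zero_iff.2 hx)).smul continuousAt_id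

lemma le_norm_of_mem_closure_coneGT {x : Euc N} (hx : x ∈ closure (coneGT N ρ Ω)) : ρ ≤ ‖x‖ :=
  closure_minimal (fun _ hy => hy.1.le) (isClosed_le continuous_const continuous_norm) hx

lemma normalize_mem_closure (hρ : 0 < ρ) {x : Euc N} (hx : x ∈ closure (coneGT N ρ Ω)) :
    ‖x‖⁻¹ • x ∈ closure Ω :=
  (continuousAt_normalize (norm_pos_iff.1
    (hρ.trans_le (le_norm_of_mem_closure_coneGT hx)))).continuousWithinAt.mem_closure hx
      fun _ hy => hy.2

end cone

namespace DirichletEigenpair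

variable {N : ℕ} {Ω : Set (Euc N)} {lam1 : ℝ} {φ : Euc N → ℝ}

lemma contDiffAt_homogeneousExtension (h : DirichletEigenpair N Ω lam1 φ)
    (hΩ : IsOpen {ω : Metric.sphere (0 : Euc N) 1 | (ω : Euc N) ∈ Ω}) {x : Euc N}
    (hx : x ∈ cone N Ω) : ContDiffAt ℝ 2 (homogeneousExtension φ) x :=
  h.smoothExt.contDiffAt ((isOpen_cone hΩ).mem_nhds hx)

lemma laplacian_homogeneousExtension (h : DirichletEigenpair N Ω lam1 φ) {x : Euc N}
    (hx : x ∈ cone N Ω) :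
    Δ (homogeneousExtension φ) x = -lam1 * ‖x‖ ^ (-2 : ℝ) * homogeneousExtension φ x := by
  rw [← lap_eq_laplacian]
  exact h.eigen x hx

lemma homogeneousExtension_pos (h : DirichletEigenpair N Ω lam1 φ) {x : Euc N}
    (hx : x ∈ cone N Ω) : 0 < homogeneousExtension φ x :=
  h.pos _ hx.2

lemma homogeneousExtension_le_one (h : DirichletEigenpair N Ω lam1 φ) {x : Euc N}
    (hx : x ∈ cone N Ω) : homogeneousExtension φ x ≤ 1 :=
  h.le_one _ (subset_closure hx.2)

lemma continuousOn_homogeneousExtension (h : DirichletEigenpair N Ω lam1 φ) {ρ : ℝ} (hρ : 0 < ρ) :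
    ContinuousOn (homogeneousExtension φ) (closure (coneGT N ρ Ω)) :=
  h.contOn.comp (fun _ hx => (continuousAt_normalize (norm_pos_iff.1
    (hρ.trans_le (le_norm_of_mem_closure_coneGT hx)))).continuousWithinAt)
      fun _ hx => normalize_mem_closure hρ hx

lemma laplacian_norm_rpow_mul_homogeneousExtension (h : DirichletEigenpair N Ω lam1 φ)
    (hΩo : IsOpen {ω : Metric.sphere (0 : Euc N) 1 | (ω : Euc N) ∈ Ω}) (a : ℝ) {x : Euc N}
    (hx : x ∈ cone N Ω) :
    Δ (fun y => ‖y‖ ^ a * homogeneousExtension φ y) x =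
      (a * (a + N - 2) - lam1) * ‖x‖ ^ (-2 : ℝ) * (‖x‖ ^ a * homogeneousExtension φ x) := by
  rw [laplacian_norm_rpow_mul a hx.1 (h.contDiffAt_homogeneousExtension hΩo hx)
    (fderiv_homogeneousExtension_self φ x), h.laplacian_homogeneousExtension hx,
    finrank_euclideanSpace_fin]
  ring

lemma contDiffAt_norm_rpow_mul_homogeneousExtension (h : DirichletEigenpair N Ω lam1 φ)
    (hΩo : IsOpen {ω : Metric.sphere (0 : Euc N) 1 | (ω : Euc N) ∈ Ω}) (a : ℝ) {x : Euc N}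
    (hx : x ∈ cone N Ω) : ContDiffAt ℝ 2 (fun y => ‖y‖ ^ a * homogeneousExtension φ y) x :=
  ((contDiffAt_norm ℝ hx.1).rpow_const_of_ne (norm_ne_zero_iff.2 hx.1)).mul
    (h.contDiffAt_homogeneousExtension hΩo hx)

lemma contDiffOn_norm_rpow_mul_homogeneousExtension (h : DirichletEigenpair N Ω lam1 φ)
    (hΩo : IsOpen {ω : Metric.sphere (0 : Euc N) 1 | (ω : Euc N) ∈ Ω}) {ρ : ℝ} (hρ : 0 ≤ ρ)
    (a : ℝ) :
    ContDiffOn ℝ 2 (fun y => ‖y‖ ^ a * homogeneousExtension φ y) (coneGT N ρ Ω) := fun _ hx =>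
  (h.contDiffAt_norm_rpow_mul_homogeneousExtension hΩo a
    (coneGT_subset_cone hρ hx)).contDiffWithinAt

lemma isHardySupersolution_norm_rpow_mul_homogeneousExtension (h : DirichletEigenpair N Ω lam1 φ)
    (hΩo : IsOpen {ω : Metric.sphere (0 : Euc N) 1 | (ω : Euc N) ∈ Ω}) {ρ : ℝ} (hρ : 0 ≤ ρ)
    {a μ : ℝ} (ha : a * (a + N - 2) = lam1 - μ) :
    IsHardySupersolution μ (coneGT N ρ Ω) fun y => ‖y‖ ^ a * homogeneousExtension φ y where
  contDiffOn := h.contDiffOn_norm_rpow_mul_homogeneousExtension hΩo hρ a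
  laplacian_nonpos x hx := by
    rw [h.laplacian_norm_rpow_mul_homogeneousExtension hΩo a (coneGT_subset_cone hρ hx), ha]
    exact le_of_eq (by ring)

lemma exists_isCompact_subset_coneGT (h : DirichletEigenpair N Ω lam1 φ)
    (hΩ : Ω ⊆ Metric.sphere (0 : Euc N) 1) {ρ r s : ℝ} (hr : 0 < r) (hρr : ρ < r) (hs : 0 < s)
    (R : ℝ) :
    ∃ K, IsCompact K ∧ K ⊆ coneGT N ρ Ω ∧
      ∀ x ∈ cone N Ω, ‖x‖ ∈ Icc r R → s ≤ homogeneousExtension φ x → x ∈ K := by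
  refine ⟨(fun y : ℝ × Euc N => y.1 • y.2) '' (Icc r R ×ˢ (closure Ω ∩ φ ⁻¹' Ici s)), ?_, ?_, ?_⟩
  · refine (isCompact_Icc.prod ?_).image (by fun_prop)
    exact (isCompact_sphere (0 : Euc N) 1).of_isClosed_subset
      (h.contOn.preimage_isClosed_of_isClosed isClosed_closure isClosed_Ici)
      (inter_subset_left.trans (closure_minimal hΩ Metric.isClosed_sphere))
  · rintro _ ⟨⟨t, ω⟩, ⟨ht, hω, hsω⟩, rfl⟩
    have hmem : ω ∈ Ω := by
      by_contra hnot
      exact absurd (h.bdryZero ω ⟨hω, hnot⟩) (hs.trans_le hsω).ne'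
    exact smul_mem_coneGT hΩ hmem (hr.trans_le ht.1) (hρr.trans_le ht.1)
  · intro x hx hxR hsx
    exact ⟨(‖x‖, ‖x‖⁻¹ • x), ⟨hxR, subset_closure hx.2, hsx⟩,
      by simp [smul_smul, (norm_pos_of_mem_cone hx).ne']⟩

lemma nonempty (h : DirichletEigenpair N Ω lam1 φ) : Ω.Nonempty :=
  closure_nonempty_iff.1 (h.max_one.imp fun _ hω => hω.1)

end DirichletEigenpair

section gammaStar

variable {N : ℕ} {lam1 μ : ℝ}

lemma two_mul_gammaStar_add_le_zero (N : ℕ) (lam1 μ : ℝ) :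
    2 * gammaStar N lam1 μ + N - 2 ≤ 0 := by
  have := Real.sqrt_nonneg (((N : ℝ) - 2) ^ 2 + 4 * (lam1 - μ))
  simp only [gammaStar]
  linarith

lemma gammaStar_mul_gammaStar_add (hμ : μ ≤ CHconst N lam1) :
    gammaStar N lam1 μ * (gammaStar N lam1 μ + N - 2) = lam1 - μ := by
  have hdisc : 0 ≤ ((N : ℝ) - 2) ^ 2 + 4 * (lam1 - μ) := by
    simp only [CHconst] at hμ
    linarith
  simp only [gammaStar]
  linear_combination (1 / 4) * Real.sq_sqrt hdisc

end gammaStar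

/-! ### Integrals over logarithmic shells -/

section LogarithmicShells

variable {E : Type*} [NormedAddCommGroup E]

lemma norm_mem_Icc_of_log_norm_mem_Icc {x : E} (hx : x ≠ 0) {a b : ℝ} (h : log ‖x‖ ∈ Icc a b) :
    ‖x‖ ∈ Icc (exp a) (exp b) :=
  have hpos := norm_pos_iff.2 hx
  ⟨(le_log_iff_exp_le hpos).1 h.1, (log_le_iff_le_exp hpos).1 h.2⟩

lemma exists_forall_abs_le_of_eq_zero {ψ : ℝ → ℝ} {a b : ℝ} (hψ : Continuous ψ)
    (hψab : ∀ t ∉ Icc a b, ψ t = 0) : ∃ M, ∀ t, |ψ t| ≤ M :=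
  hψ.bounded_above_of_compact_support (.of_support_subset_isCompact isCompact_Icc fun t ht =>
    not_imp_comm.1 (hψab t) ht)

lemma comp_sub_eq_zero {ψ : ℝ → ℝ} {a b : ℝ} (hψab : ∀ t ∉ Icc a b, ψ t = 0) (τ : ℝ) :
    ∀ t ∉ Icc (a + τ) (b + τ), ψ (t - τ) = 0 := fun t ht =>
  hψab _ fun h => ht ⟨by linarith [h.1], by linarith [h.2]⟩

variable [MeasurableSpace E] [BorelSpace E] {ν : Measure E} {U : Set E} {ψ : ℝ → ℝ} {a b : ℝ}

lemma measurable_comp_log_norm (hψ : Continuous ψ) : Measurable fun x : E => ψ (log ‖x‖) :=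
  hψ.measurable.comp (measurable_log.comp measurable_norm)

lemma integrableOn_mul_comp_log_norm [ProperSpace E] [IsFiniteMeasureOnCompacts ν]
    (hU : MeasurableSet U) (hU0 : (0 : E) ∉ U) {F : E → ℝ} (hF : ContinuousOn F U) {C : ℝ}
    (hFC : ∀ x ∈ U, log ‖x‖ ∈ Icc a b → |F x| ≤ C) (hψ : Continuous ψ)
    (hψab : ∀ t ∉ Icc a b, ψ t = 0) :
    IntegrableOn (fun x => F x * ψ (log ‖x‖)) U ν := by
  obtain ⟨M, hM⟩ := exists_forall_abs_le_of_eq_zero hψ hψab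
  have hmeas : AEStronglyMeasurable (fun x => F x * ψ (log ‖x‖)) (ν.restrict U) :=
    (hF.aestronglyMeasurable hU).mul (measurable_comp_log_norm hψ).aestronglyMeasurable
  have hball : IntegrableOn (fun x => F x * ψ (log ‖x‖)) (U ∩ Metric.closedBall 0 (exp b)) ν := by
    refine IntegrableOn.of_bound ((measure_mono inter_subset_right).trans_lt
      (isCompact_closedBall (0 : E) (exp b)).measure_lt_top)
      (hmeas.mono_set inter_subset_left) (|C| * M) ?_
    filter_upwards [ae_restrict_mem (hU.inter Metric.isClosed_closedBall.measurableSet)] with x hx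
    by_cases hab : log ‖x‖ ∈ Icc a b
    · rw [norm_mul]
      exact mul_le_mul ((hFC x hx.1 hab).trans (le_abs_self C)) (hM _) (abs_nonneg _)
        (abs_nonneg C)
    · rw [hψab _ hab, mul_zero, norm_zero]
      exact mul_nonneg (abs_nonneg C) ((abs_nonneg _).trans (hM 0))
  refine hball.of_forall_sdiff_eq_zero hU fun x hx => ?_
  rw [hψab _ fun hab => hx.2 ⟨hx.1, mem_closedBall_zero_iff.2
    (norm_mem_Icc_of_log_norm_mem_Icc (fun h0 => hU0 (h0 ▸ hx.1)) hab).2⟩, mul_zero]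

lemma integrableOn_mul_comp_log_norm_of_integrableOn {W : E → ℝ} (hW : IntegrableOn W U ν)
    (hψ : Continuous ψ) (hψab : ∀ t ∉ Icc a b, ψ t = 0) :
    IntegrableOn (fun x => W x * ψ (log ‖x‖)) U ν :=
  have ⟨M, hM⟩ := exists_forall_abs_le_of_eq_zero hψ hψab
  hW.mul_bdd (c := M) (measurable_comp_log_norm hψ).aestronglyMeasurable (.of_forall fun _ => hM _)

lemma tendsto_setIntegral_mul_comp_log_norm_sub {W : E → ℝ} (hW : IntegrableOn W U ν)
    (hψ : Continuous ψ) (hψab : ∀ t ∉ Icc a b, ψ t = 0) :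
    Tendsto (fun τ => ∫ x in U, W x * ψ (log ‖x‖ - τ) ∂ν) atTop (𝓝 0) := by
  obtain ⟨M, hM⟩ := exists_forall_abs_le_of_eq_zero hψ hψab
  rw [← integral_zero E ℝ (μ := ν.restrict U)]
  refine tendsto_integral_filter_of_dominated_convergence (fun x => |W x| * M)
    (.of_forall fun τ => ?_) (.of_forall fun τ => .of_forall fun x => ?_)
    (hW.abs.mul_const M) (.of_forall fun x => ?_)
  · exact (integrableOn_mul_comp_log_norm_of_integrableOn hW (hψ.comp (continuous_sub_right τ))
      (comp_sub_eq_zero hψab τ)).aestronglyMeasurable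
  · rw [norm_mul]
    exact mul_le_mul_of_nonneg_left (hM _) (abs_nonneg _)
  · refine tendsto_const_nhds.congr' ?_
    filter_upwards [eventually_gt_atTop (log ‖x‖ - a)] with τ hτ
    rw [hψab _ fun h => by linarith [h.1], mul_zero]

lemma setIntegral_mul_comp_log_norm_pos [ν.IsOpenPosMeasure] (hU : IsOpen U)
    (hU0 : (0 : E) ∉ U) {f : E → ℝ} (hf : ∀ x ∈ U, 0 < f x) (hψ : Continuous ψ)
    (hψ0 : ∀ t, 0 ≤ ψ t) (hint : IntegrableOn (fun x => f x * ψ (log ‖x‖)) U ν) {x : E}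
    (hx : x ∈ U) (hψx : 0 < ψ (log ‖x‖)) :
    0 < ∫ y in U, f y * ψ (log ‖y‖) ∂ν := by
  have hlog : ContinuousOn (fun y : E => ψ (log ‖y‖)) U := hψ.comp_continuousOn
    (continuous_norm.continuousOn.log fun y hy => norm_ne_zero_iff.2 fun h => hU0 (h ▸ hy))
  have hnonneg : ∀ y ∈ U, 0 ≤ f y * ψ (log ‖y‖) := fun y hy => mul_nonneg (hf y hy).le (hψ0 _)
  rw [setIntegral_pos_iff_support_of_nonneg_ae
    (ae_restrict_of_forall_mem hU.measurableSet hnonneg) hint]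
  refine ((hlog.isOpen_inter_preimage hU isOpen_Ioi).measure_pos ν ⟨x, hx, hψx⟩).trans_le
    (measure_mono fun y hy => ⟨(mul_pos (hf y hy.1) hy.2).ne', hy.1⟩)

section Scaling

variable [NormedSpace ℝ E] [FiniteDimensional ℝ E] [ν.IsAddHaarMeasure]

open scoped Pointwise in
lemma setIntegral_norm_rpow_mul_comp_log_norm_sub (ψ : ℝ → ℝ) (τ : ℝ) :
    ∫ x in {0}ᶜ, ‖x‖ ^ (-Module.finrank ℝ E : ℝ) * ψ (log ‖x‖ - τ) ∂ν =
      ∫ x in {0}ᶜ, ‖x‖ ^ (-Module.finrank ℝ E : ℝ) * ψ (log ‖x‖) ∂ν := by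
  have hcompl : exp τ • ({0}ᶜ : Set E) = {0}ᶜ := by
    ext x
    simp [mem_smul_set_iff_inv_smul_mem₀ (exp_pos τ).ne']
  have hscale := Measure.setIntegral_comp_smul_of_pos ν
    (fun x : E => ‖x‖ ^ (-Module.finrank ℝ E : ℝ) * ψ (log ‖x‖ - τ)) {0}ᶜ (exp_pos τ)
  rw [hcompl, eq_inv_smul_iff₀ (by positivity), smul_eq_mul, ← integral_const_mul] at hscale
  rw [← hscale]
  refine setIntegral_congr_fun (measurableSet_singleton 0).compl fun x hx => ?_
  have hx0 : 0 < ‖x‖ := norm_pos_iff.2 hx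
  simp only [norm_smul, norm_of_nonneg (exp_pos τ).le]
  rw [log_mul (exp_pos τ).ne' hx0.ne', log_exp, add_sub_cancel_left,
    mul_rpow (exp_pos τ).le hx0.le, rpow_neg (exp_pos τ).le, rpow_natCast, ← mul_assoc,
    mul_inv_cancel_left₀ (by positivity)]

lemma integrableOn_norm_rpow_mul_comp_log_norm (s : ℝ) (hψ : Continuous ψ)
    (hψab : ∀ t ∉ Icc a b, ψ t = 0) :
    IntegrableOn (fun x : E => ‖x‖ ^ s * ψ (log ‖x‖)) {0}ᶜ ν := by
  refine integrableOn_mul_comp_log_norm (C := exp (max |a| |b| * |s|))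
    (measurableSet_singleton 0).compl (by simp)
    (fun x hx => (continuousAt_id.norm.rpow_const
      (.inl (norm_ne_zero_iff.2 hx))).continuousWithinAt)
    (fun x hx hab => ?_) hψ hψab
  rw [rpow_def_of_pos (norm_pos_iff.2 hx), abs_exp]
  refine exp_le_exp.2 ((le_abs_self _).trans ?_)
  rw [abs_mul]
  exact mul_le_mul_of_nonneg_right (abs_le_max_abs_abs hab.1 hab.2) (abs_nonneg s)

lemma setIntegral_mul_comp_log_norm_sub_le (hU0 : U ⊆ {0}ᶜ) (hU : MeasurableSet U) {f W : E → ℝ}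
    (hf : ∀ x ∈ U, 0 ≤ f x) (hW : IntegrableOn W U ν) (hψ : Continuous ψ) (hψ0 : ∀ t, 0 ≤ ψ t)
    (hψab : ∀ t ∉ Icc a b, ψ t = 0) {k K : ℝ} (hk : 0 ≤ k)
    (hle : ∀ x ∈ U, f x ≤ k * ‖x‖ ^ (-Module.finrank ℝ E : ℝ) + K * W x) (τ : ℝ) :
    ∫ x in U, f x * ψ (log ‖x‖ - τ) ∂ν ≤
      k * ∫ x in {0}ᶜ, ‖x‖ ^ (-Module.finrank ℝ E : ℝ) * ψ (log ‖x‖) ∂ν +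
        K * ∫ x in U, W x * ψ (log ‖x‖ - τ) ∂ν := by
  have hψτ : Continuous fun t => ψ (t - τ) := hψ.comp (continuous_sub_right τ)
  have hP := integrableOn_norm_rpow_mul_comp_log_norm (ν := ν) (-Module.finrank ℝ E : ℝ) hψτ
    (comp_sub_eq_zero hψab τ)
  have hWψ := integrableOn_mul_comp_log_norm_of_integrableOn hW hψτ (comp_sub_eq_zero hψab τ)
  have hP_le := setIntegral_mono_set hP
    (ae_restrict_of_forall_mem (measurableSet_singleton 0).compl fun x _ =>
      mul_nonneg (rpow_nonneg (norm_nonneg x) _) (hψ0 _)) hU0.eventuallyLE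
  rw [setIntegral_norm_rpow_mul_comp_log_norm_sub] at hP_le
  calc ∫ x in U, f x * ψ (log ‖x‖ - τ) ∂ν
      ≤ ∫ x in U, (k * (‖x‖ ^ (-Module.finrank ℝ E : ℝ) * ψ (log ‖x‖ - τ)) +
          K * (W x * ψ (log ‖x‖ - τ))) ∂ν := by
        refine integral_mono_of_nonneg
          (ae_restrict_of_forall_mem hU fun x hx => mul_nonneg (hf x hx) (hψ0 _))
          (((hP.mono_set hU0).const_mul k).add (hWψ.const_mul K))
          (ae_restrict_of_forall_mem hU fun x hx => ?_)
        exact (mul_le_mul_of_nonneg_right (hle x hx) (hψ0 _)).trans_eq (by ring)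
    _ = k * ∫ x in U, ‖x‖ ^ (-Module.finrank ℝ E : ℝ) * ψ (log ‖x‖ - τ) ∂ν +
          K * ∫ x in U, W x * ψ (log ‖x‖ - τ) ∂ν := by
        rw [integral_add ((hP.mono_set hU0).const_mul k) (hWψ.const_mul K), integral_const_mul,
          integral_const_mul]
    _ ≤ _ := by gcongr

lemma tendsto_setIntegral_mul_comp_log_norm_sub_of_le (hU0 : U ⊆ {0}ᶜ) (hU : MeasurableSet U)
    {f W : E → ℝ} (hf : ∀ x ∈ U, 0 ≤ f x) (hW : IntegrableOn W U ν) (hψ : Continuous ψ)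
    (hψ0 : ∀ t, 0 ≤ ψ t) (hψab : ∀ t ∉ Icc a b, ψ t = 0)
    (hle : ∀ k > 0, ∃ K, ∀ x ∈ U, f x ≤ k * ‖x‖ ^ (-Module.finrank ℝ E : ℝ) + K * W x) :
    Tendsto (fun τ => ∫ x in U, f x * ψ (log ‖x‖ - τ) ∂ν) atTop (𝓝 0) := by
  set I := ∫ x in ({0}ᶜ : Set E), ‖x‖ ^ (-Module.finrank ℝ E : ℝ) * ψ (log ‖x‖) ∂ν
  have hI : 0 ≤ I := integral_nonneg fun x =>
    mul_nonneg (rpow_nonneg (norm_nonneg x) _) (hψ0 _)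
  refine tendsto_order.2 ⟨fun δ hδ => .of_forall fun τ => hδ.trans_le
    (setIntegral_nonneg hU fun x hx => mul_nonneg (hf x hx) (hψ0 _)), fun δ hδ => ?_⟩
  obtain ⟨k, hk, hkI⟩ : ∃ k > 0, k * I < δ :=
    ⟨δ / (I + 1), by positivity, by
      rw [div_mul_eq_mul_div, div_lt_iff₀ (by positivity)]
      linarith⟩
  obtain ⟨K, hK⟩ := hle k hk
  have hlim : Tendsto (fun τ => k * I + K * ∫ x in U, W x * ψ (log ‖x‖ - τ) ∂ν) atTop
      (𝓝 (k * I)) := by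
    simpa using ((tendsto_setIntegral_mul_comp_log_norm_sub hW hψ hψab).const_mul K).const_add
      (k * I)
  filter_upwards [hlim.eventually (gt_mem_nhds hkI)] with τ hτ
  exact (setIntegral_mul_comp_log_norm_sub_le hU0 hU hf hW hψ hψ0 hψab hk.le hK τ).trans_lt hτ

end Scaling

end LogarithmicShells

/-! ### Comparison of shell integrals of a supersolution -/

/-- The test function `|x|^a η(log |x|) Θ(Φ(x))`, with `Θ` the convex cutoff at height `s`. -/
def testFunction {N : ℕ} (φ : Euc N → ℝ) (a s : ℝ) (η : ℝ → ℝ) (x : Euc N) : ℝ :=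
  ‖x‖ ^ a * η (log ‖x‖) * convexCutoff s (homogeneousExtension φ x)

namespace DirichletEigenpair

variable {N : ℕ} {Ω : Set (Euc N)} {lam1 μ ρ a s C α β : ℝ} {φ v w : Euc N → ℝ} {η G ψ : ℝ → ℝ}

lemma contDiffAt_convexCutoff_comp (h : DirichletEigenpair N Ω lam1 φ)
    (hΩ : IsOpen {ω : Metric.sphere (0 : Euc N) 1 | (ω : Euc N) ∈ Ω}) {x : Euc N}
    (hx : x ∈ cone N Ω) : ContDiffAt ℝ 2 (fun y => convexCutoff s (homogeneousExtension φ y)) x :=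
  (contDiff_convexCutoff s).contDiffAt.comp x (h.contDiffAt_homogeneousExtension hΩ hx)

lemma fderiv_convexCutoff_comp_self (s : ℝ) (φ : Euc N → ℝ) (x : Euc N) :
    fderiv ℝ (fun y => convexCutoff s (homogeneousExtension φ y)) x x = 0 :=
  fderiv_homogeneousExtension_self (fun ω => convexCutoff s (φ ω)) x

lemma le_laplacian_convexCutoff_comp (h : DirichletEigenpair N Ω lam1 φ)
    (hΩ : IsOpen {ω : Metric.sphere (0 : Euc N) 1 | (ω : Euc N) ∈ Ω}) (hs : 0 < s) {x : Euc N}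
    (hx : x ∈ cone N Ω) :
    -lam1 * ‖x‖ ^ (-2 : ℝ) *
        (homogeneousExtension φ x * deriv (convexCutoff s) (homogeneousExtension φ x)) ≤
      Δ (fun y => convexCutoff s (homogeneousExtension φ y)) x := by
  rw [laplacian_fun_comp (contDiff_convexCutoff s).contDiffAt
    (h.contDiffAt_homogeneousExtension hΩ hx), h.laplacian_homogeneousExtension hx]
  have := mul_nonneg (deriv_deriv_convexCutoff_nonneg hs (homogeneousExtension φ x))
    (sq_nonneg ‖∇ (homogeneousExtension φ) x‖)
  linarith

lemma contDiffAt_testFunction (h : DirichletEigenpair N Ω lam1 φ)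
    (hΩ : IsOpen {ω : Metric.sphere (0 : Euc N) 1 | (ω : Euc N) ∈ Ω}) (hη : ContDiff ℝ 2 η)
    {x : Euc N} (hx : x ∈ cone N Ω) : ContDiffAt ℝ 2 (testFunction φ a s η) x :=
  (((contDiffAt_norm ℝ hx.1).rpow_const_of_ne (norm_ne_zero_iff.2 hx.1)).mul
    (hη.contDiffAt.comp x (contDiffAt_log_norm hx.1))).mul (h.contDiffAt_convexCutoff_comp hΩ hx)

lemma le_laplacian_testFunction_add (h : DirichletEigenpair N Ω lam1 φ)
    (hΩ : IsOpen {ω : Metric.sphere (0 : Euc N) 1 | (ω : Euc N) ∈ Ω})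
    (ha : a * (a + N - 2) = lam1 - μ) (hs : 0 < s) (hη : ContDiff ℝ 2 η) (hη0 : ∀ t, 0 ≤ η t)
    {x : Euc N} (hx : x ∈ cone N Ω) :
    ‖x‖ ^ (a - 2) * ((deriv (deriv η) (log ‖x‖) + (2 * a + N - 2) * deriv η (log ‖x‖)) *
        convexCutoff s (homogeneousExtension φ x) - lam1 * η (log ‖x‖) *
          (homogeneousExtension φ x * deriv (convexCutoff s) (homogeneousExtension φ x) -
            convexCutoff s (homogeneousExtension φ x))) ≤
      Δ (testFunction φ a s η) x + μ * ‖x‖ ^ (-2 : ℝ) * testFunction φ a s η x := by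
  have hangular := mul_le_mul_of_nonneg_left (h.le_laplacian_convexCutoff_comp hΩ hs hx)
    (mul_nonneg (rpow_nonneg (norm_nonneg x) a) (hη0 (log ‖x‖)))
  have hlap : Δ (testFunction φ a s η) x = _ :=
    laplacian_norm_rpow_mul_comp_log_norm_mul a hx.1 hη
      (h.contDiffAt_convexCutoff_comp (s := s) hΩ hx) (fderiv_convexCutoff_comp_self s φ x)
  rw [finrank_euclideanSpace_fin] at hlap
  have hμ : μ = lam1 - a * (a + N - 2) := by linarith
  rw [sub_eq_add_neg a 2, rpow_add (norm_pos_iff.2 hx.1)]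
  rw [hlap, testFunction, hμ]
  linarith

lemma exists_isCompact_forall_testFunction_eq_zero (h : DirichletEigenpair N Ω lam1 φ)
    (hΩ : Ω ⊆ Metric.sphere (0 : Euc N) 1) (hs : 0 < s) (hρα : ρ < exp α)
    (hηαβ : ∀ t ∉ Icc α β, η t = 0) :
    ∃ K, IsCompact K ∧ K ⊆ coneGT N ρ Ω ∧ ∀ x ∈ cone N Ω \ K, testFunction φ a s η x = 0 := by
  obtain ⟨K, hK, hKU, hmem⟩ := h.exists_isCompact_subset_coneGT hΩ (exp_pos α) hρα hs (exp β)
  refine ⟨K, hK, hKU, fun x hx => ?_⟩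
  by_cases hlog : log ‖x‖ ∈ Icc α β
  · have hΦ : homogeneousExtension φ x ≤ s := le_of_not_ge fun hsx =>
      hx.2 (hmem x hx.1 (norm_mem_Icc_of_log_norm_mem_Icc hx.1.1 hlog) hsx)
    rw [testFunction, convexCutoff_of_le hs hΦ, mul_zero]
  · rw [testFunction, hηαβ _ hlog, mul_zero, zero_mul]

lemma sub_le_laplacian_testFunction_add (h : DirichletEigenpair N Ω lam1 φ)
    (hΩ : IsOpen {ω : Metric.sphere (0 : Euc N) 1 | (ω : Euc N) ∈ Ω})
    (ha : a * (a + N - 2) = lam1 - μ) (hs : 0 < s) (hη : ContDiff ℝ 2 η) (hη0 : ∀ t, 0 ≤ η t)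
    (hG : ∀ t, deriv (deriv η) t + (2 * a + N - 2) * deriv η t = G t) {x : Euc N}
    (hx : x ∈ cone N Ω) :
    ‖x‖ ^ (a - 2) * (homogeneousExtension φ x * G (log ‖x‖) -
        2 * s * (|G (log ‖x‖)| + |lam1| * η (log ‖x‖))) ≤
      Δ (testFunction φ a s η) x + μ * ‖x‖ ^ (-2 : ℝ) * testFunction φ a s η x := by
  refine le_trans ?_ (h.le_laplacian_testFunction_add hΩ ha hs hη hη0 hx)
  rw [hG]
  have hΦ := (h.homogeneousExtension_pos hx).le
  have hvalue := neg_le_of_abs_le ((abs_mul (G (log ‖x‖)) _).trans_le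
    (mul_le_mul_of_nonneg_left (abs_convexCutoff_sub_self_le hs hΦ) (abs_nonneg _)))
  have hslope := le_of_abs_le ((abs_mul (lam1 * η (log ‖x‖)) _).trans_le
    (mul_le_mul_of_nonneg_left (abs_mul_deriv_convexCutoff_sub_le hs (homogeneousExtension φ x))
      (abs_nonneg _)))
  rw [abs_mul lam1, abs_of_nonneg (hη0 _)] at hslope
  refine mul_le_mul_of_nonneg_left ?_ (rpow_nonneg (norm_nonneg x) _)
  linarith

lemma setIntegral_le_two_mul_mul_setIntegral (h : DirichletEigenpair N Ω lam1 φ)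
    (hΩ : Ω ⊆ Metric.sphere (0 : Euc N) 1)
    (hΩo : IsOpen {ω : Metric.sphere (0 : Euc N) 1 | (ω : Euc N) ∈ Ω}) (hρ : 0 < ρ)
    (ha : a * (a + N - 2) = lam1 - μ) (hs : 0 < s)
    (hv : IsHardySupersolution μ (coneGT N ρ Ω) v) (hv0 : ∀ x ∈ coneGT N ρ Ω, 0 ≤ v x)
    (hw : ∀ x ∈ coneGT N ρ Ω, w x = v x * ‖x‖ ^ (a - 2))
    (hη : ContDiff ℝ 2 η) (hη0 : ∀ t, 0 ≤ η t) (hρα : ρ < exp α)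
    (hηαβ : ∀ t ∉ Icc α β, η t = 0)
    (hG : ∀ t, deriv (deriv η) t + (2 * a + N - 2) * deriv η t = G t)
    (hwG : IntegrableOn (fun x => w x * homogeneousExtension φ x * G (log ‖x‖)) (coneGT N ρ Ω))
    (hwE : IntegrableOn (fun x => w x * (|G (log ‖x‖)| + |lam1| * η (log ‖x‖))) (coneGT N ρ Ω)) :
    ∫ x in coneGT N ρ Ω, w x * homogeneousExtension φ x * G (log ‖x‖) ≤
      2 * s * ∫ x in coneGT N ρ Ω, w x * (|G (log ‖x‖)| + |lam1| * η (log ‖x‖)) := by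
  have hU := isOpen_coneGT hΩo hρ.le
  obtain ⟨K, hK, hKU, hζK⟩ := h.exists_isCompact_forall_testFunction_eq_zero (a := a) hΩ hs hρα
    hηαβ
  have hweak := hv.setIntegral_nonpos_of_le hU hK hKU
    (fun x hx => (h.contDiffAt_testFunction (a := a) (s := s) hΩo hη
      (coneGT_subset_cone hρ.le hx)).contDiffWithinAt)
    (fun x _ => mul_nonneg (mul_nonneg (rpow_nonneg (norm_nonneg x) a) (hη0 _))
      (convexCutoff_nonneg hs _))
    (fun x hx => hζK x ⟨coneGT_subset_cone hρ.le hx.1, hx.2⟩)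
    (hwG.sub (hwE.const_mul (2 * s))) fun x hx => ?_
  · rwa [integral_sub' hwG (hwE.const_mul (2 * s)), sub_nonpos, integral_const_mul] at hweak
  · refine le_of_eq_of_le ?_ (mul_le_mul_of_nonneg_left (h.sub_le_laplacian_testFunction_add hΩo
      ha hs hη hη0 hG (coneGT_subset_cone hρ.le hx)) (hv0 x hx))
    simp only [Pi.sub_apply, hw x hx]
    ring

lemma integrableOn_mul_homogeneousExtension_mul_comp_log_norm (h : DirichletEigenpair N Ω lam1 φ)
    (hΩo : IsOpen {ω : Metric.sphere (0 : Euc N) 1 | (ω : Euc N) ∈ Ω}) (hρ : 0 < ρ)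
    (hwc : ContinuousOn w (coneGT N ρ Ω)) (hwC : ∀ x ∈ coneGT N ρ Ω, |w x| ≤ C)
    (hψ : Continuous ψ) (hψαβ : ∀ t ∉ Icc α β, ψ t = 0) :
    IntegrableOn (fun x => w x * homogeneousExtension φ x * ψ (log ‖x‖)) (coneGT N ρ Ω) := by
  refine integrableOn_mul_comp_log_norm (isOpen_coneGT hΩo hρ.le).measurableSet
    (fun h0 => (norm_zero.symm.trans_gt h0.1).not_gt hρ)
    (hwc.mul (h.continuousOn_homogeneousExtension hρ |>.mono subset_closure)) (C := C)
    (fun x hx _ => ?_) hψ hψαβ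
  have hxc := coneGT_subset_cone hρ.le hx
  rw [abs_mul, abs_of_pos (h.homogeneousExtension_pos hxc)]
  exact (mul_le_of_le_one_right (abs_nonneg _) (h.homogeneousExtension_le_one hxc)).trans
    (hwC x hx)

lemma setIntegral_mul_comp_log_norm_nonpos (h : DirichletEigenpair N Ω lam1 φ)
    (hΩ : Ω ⊆ Metric.sphere (0 : Euc N) 1)
    (hΩo : IsOpen {ω : Metric.sphere (0 : Euc N) 1 | (ω : Euc N) ∈ Ω}) (hρ : 0 < ρ)
    (ha : a * (a + N - 2) = lam1 - μ) (hv : IsHardySupersolution μ (coneGT N ρ Ω) v)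
    (hv0 : ∀ x ∈ coneGT N ρ Ω, 0 ≤ v x) (hw : ∀ x ∈ coneGT N ρ Ω, w x = v x * ‖x‖ ^ (a - 2))
    (hwc : ContinuousOn w (coneGT N ρ Ω)) (hwC : ∀ x ∈ coneGT N ρ Ω, |w x| ≤ C)
    (hη : ContDiff ℝ 2 η) (hη0 : ∀ t, 0 ≤ η t) (hρα : ρ < exp α)
    (hηαβ : ∀ t ∉ Icc α β, η t = 0)
    (hG : ∀ t, deriv (deriv η) t + (2 * a + N - 2) * deriv η t = G t)
    (hGc : Continuous G) (hGαβ : ∀ t ∉ Icc α β, G t = 0) :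
    ∫ x in coneGT N ρ Ω, w x * homogeneousExtension φ x * G (log ‖x‖) ≤ 0 := by
  have hwG := h.integrableOn_mul_homogeneousExtension_mul_comp_log_norm hΩo hρ hwc hwC hGc hGαβ
  have hwE := integrableOn_mul_comp_log_norm (ν := volume) (isOpen_coneGT hΩo hρ.le).measurableSet
    (fun h0 => (norm_zero.symm.trans_gt h0.1).not_gt hρ) hwc (fun x hx _ => hwC x hx)
    (ψ := fun t => |G t| + |lam1| * η t) (hGc.abs.add (hη.continuous.const_mul _))
    (a := α) (b := β) fun t ht => by rw [hGαβ t ht, hηαβ t ht, abs_zero, mul_zero, add_zero]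
  set J := ∫ x in coneGT N ρ Ω, w x * (|G (log ‖x‖)| + |lam1| * η (log ‖x‖))
  have hlim : Tendsto (fun s : ℝ => 2 * s * J) (𝓝[>] 0) (𝓝 0) := by
    refine tendsto_nhdsWithin_of_tendsto_nhds (Continuous.tendsto' (by fun_prop) _ _ ?_)
    rw [mul_zero, zero_mul]
  refine ge_of_tendsto hlim ?_
  filter_upwards [self_mem_nhdsWithin] with s hs
  exact h.setIntegral_le_two_mul_mul_setIntegral hΩ hΩo hρ ha hs hv hv0 hw hη hη0 hρα hηαβ hG hwG
    hwE

lemma setIntegral_mul_comp_log_norm_sub_add_nonpos (h : DirichletEigenpair N Ω lam1 φ)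
    (hΩ : Ω ⊆ Metric.sphere (0 : Euc N) 1)
    (hΩo : IsOpen {ω : Metric.sphere (0 : Euc N) 1 | (ω : Euc N) ∈ Ω}) (hρ : 0 < ρ)
    (ha : a * (a + N - 2) = lam1 - μ) (hv : IsHardySupersolution μ (coneGT N ρ Ω) v)
    (hv0 : ∀ x ∈ coneGT N ρ Ω, 0 ≤ v x) (hw : ∀ x ∈ coneGT N ρ Ω, w x = v x * ‖x‖ ^ (a - 2))
    (hwc : ContinuousOn w (coneGT N ρ Ω)) (hwC : ∀ x ∈ coneGT N ρ Ω, |w x| ≤ C)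
    (hψ : Continuous ψ) (hψ0 : ∀ t, 0 ≤ ψ t) (hρα : ρ < exp α)
    (hψαβ : ∀ t ∉ Icc α β, ψ t = 0) {L : ℝ} (hL : 0 ≤ L) :
    (∫ x in coneGT N ρ Ω, w x * homogeneousExtension φ x * ψ (log ‖x‖ - 0)) -
      (1 + exp (-(2 * a + N - 2) * L)) *
        (∫ x in coneGT N ρ Ω, w x * homogeneousExtension φ x * ψ (log ‖x‖ - L)) +
      exp (-(2 * a + N - 2) * L) *
        (∫ x in coneGT N ρ Ω, w x * homogeneousExtension φ x * ψ (log ‖x‖ - (L + L))) ≤ 0 := by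
  set e := exp (-(2 * a + N - 2) * L)
  have hint (τ : ℝ) := h.integrableOn_mul_homogeneousExtension_mul_comp_log_norm hΩo hρ hwc hwC
    (hψ.comp (continuous_sub_right τ)) (comp_sub_eq_zero hψαβ τ)
  have hzero (τ : ℝ) (hτ0 : 0 ≤ τ) (hτ : τ ≤ L + L) (t : ℝ) (ht : t ∉ Icc α (β + L + L)) :
      ψ (t - τ) = 0 :=
    comp_sub_eq_zero hψαβ τ t fun h => ht ⟨by linarith [h.1], by linarith [h.2]⟩
  refine le_of_eq_of_le ?_ (h.setIntegral_mul_comp_log_norm_nonpos hΩ hΩo hρ ha hv hv0 hw hwc hwC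
    (contDiff_tentProfile (A := 2 * a + N - 2) (L := L) hψ) (tentProfile_nonneg hL hψ0) hρα
    (fun t => tentProfile_eq_zero hL hψαβ)
    (G := fun t => ψ (t - 0) - (1 + e) * ψ (t - L) + e * ψ (t - (L + L))) (fun t => ?_)
    (by fun_prop) fun t ht => ?_)
  · rw [← integral_const_mul, ← integral_const_mul]
    refine ((integral_add ((hint 0).sub ((hint L).const_mul (1 + e)))
      ((hint (L + L)).const_mul e)).trans (congrArg (· + _)
        (integral_sub (hint 0) ((hint L).const_mul (1 + e))))).symm.trans ?_
    congr with x
    simp only [Pi.sub_apply, Function.comp_apply]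
    ring
  · rw [deriv_deriv_tentProfile_add hψ, sub_zero, sub_sub t L L]
  · rw [hzero 0 le_rfl (by linarith) t ht, hzero L hL (by linarith) t ht,
      hzero (L + L) (by linarith) le_rfl t ht]
    ring

lemma setIntegral_mul_comp_log_norm_le_two_mul (h : DirichletEigenpair N Ω lam1 φ)
    (hΩ : Ω ⊆ Metric.sphere (0 : Euc N) 1)
    (hΩo : IsOpen {ω : Metric.sphere (0 : Euc N) 1 | (ω : Euc N) ∈ Ω}) (hρ : 0 < ρ)
    (ha : a * (a + N - 2) = lam1 - μ) (ha0 : 0 ≤ 2 * a + N - 2)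
    (hv : IsHardySupersolution μ (coneGT N ρ Ω) v) (hv0 : ∀ x ∈ coneGT N ρ Ω, 0 ≤ v x)
    (hw : ∀ x ∈ coneGT N ρ Ω, w x = v x * ‖x‖ ^ (a - 2))
    (hwc : ContinuousOn w (coneGT N ρ Ω)) (hwC : ∀ x ∈ coneGT N ρ Ω, |w x| ≤ C)
    (hψ : Continuous ψ) (hψ0 : ∀ t, 0 ≤ ψ t) (hρα : ρ < exp α)
    (hψαβ : ∀ t ∉ Icc α β, ψ t = 0) {L : ℝ} (hL : 0 ≤ L) :
    ∫ x in coneGT N ρ Ω, w x * homogeneousExtension φ x * ψ (log ‖x‖) ≤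
      2 * ∫ x in coneGT N ρ Ω, w x * homogeneousExtension φ x * ψ (log ‖x‖ - L) := by
  have hweak := h.setIntegral_mul_comp_log_norm_sub_add_nonpos hΩ hΩo hρ ha hv hv0 hw hwc hwC hψ
    hψ0 hρα hψαβ hL
  have hI0 (τ : ℝ) :
      0 ≤ ∫ x in coneGT N ρ Ω, w x * homogeneousExtension φ x * ψ (log ‖x‖ - τ) :=
    setIntegral_nonneg (isOpen_coneGT hΩo hρ.le).measurableSet fun x hx => by
      rw [hw x hx]
      exact mul_nonneg (mul_nonneg (mul_nonneg (hv0 x hx) (rpow_nonneg (norm_nonneg x) _))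
        (h.homogeneousExtension_pos (coneGT_subset_cone hρ.le hx)).le) (hψ0 _)
  have hexp : exp (-(2 * a + N - 2) * L) ≤ 1 := exp_le_one_iff.2 (by nlinarith)
  simp only [sub_zero] at hweak
  linarith [mul_le_of_le_one_left (hI0 L) hexp,
    mul_nonneg (exp_pos (-(2 * a + N - 2) * L)).le (hI0 (L + L))]

end DirichletEigenpair

/-! ### Nonexistence -/

lemma mul_rpow_le_add_mul_rpow {t ρ k p γ n v y : ℝ} (hρ : 0 < ρ) (hρt : ρ ≤ t) (hk : 0 < k)
    (hp : 0 ≤ p) (hn : -(p * γ) ≤ n) (hvt : v ≤ t ^ γ) (hvy : v ≤ y) (hy : 0 ≤ y) :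
    v * t ^ (-n - γ) ≤ k * t ^ (-n) + ρ ^ (-n - p * γ) * k ^ (-p) * y ^ p := by
  have ht : 0 < t := hρ.trans_le hρt
  have hsplit : t ^ γ * t ^ (-n - γ) = t ^ (-n) := by
    rw [← rpow_add ht, add_sub_cancel]
  rcases le_or_gt v (k * t ^ γ) with hvk | hvk
  · refine le_add_of_le_of_nonneg ?_ (by positivity)
    rw [← hsplit, ← mul_assoc]
    gcongr
  · refine le_add_of_nonneg_of_le (by positivity) ?_
    calc v * t ^ (-n - γ) ≤ t ^ γ * t ^ (-n - γ) := by gcongr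
      _ = t ^ (-n - p * γ) * k ^ (-p) * (k * t ^ γ) ^ p := by
          rw [hsplit, mul_rpow hk.le (rpow_nonneg ht.le γ), ← rpow_mul ht.le, rpow_neg hk.le,
            mul_assoc, inv_mul_cancel_left₀ (by positivity), ← rpow_add ht]
          ring_nf
      _ ≤ ρ ^ (-n - p * γ) * k ^ (-p) * y ^ p := by
          have hpow := rpow_le_rpow_of_nonpos hρ hρt (z := -n - p * γ) (by linarith)
          have hky := hvk.le.trans hvy
          gcongr

/-- The harmonic sum of `u` and the homogeneous solution `‖x‖ ^ γ * Φ x`, multiplied by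
`‖x‖ ^ (-N - γ)`: the density whose integrals over logarithmic shells of the cone are compared in
the nonexistence proof. The harmonic sum is a smooth substitute for the minimum. -/
def truncatedDensity {N : ℕ} (φ u : Euc N → ℝ) (γ : ℝ) (x : Euc N) : ℝ :=
  ((‖x‖ ^ γ * homogeneousExtension φ x)⁻¹ + (u x)⁻¹)⁻¹ * ‖x‖ ^ (-N - γ)

namespace DirichletEigenpair

variable {N : ℕ} {Ω : Set (Euc N)} {lam1 μ ρ γ p α β : ℝ} {φ u : Euc N → ℝ} {ψ : ℝ → ℝ}
  {x : Euc N}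

lemma truncatedDensity_pos (h : DirichletEigenpair N Ω lam1 φ) (γ : ℝ) (hx : x ∈ cone N Ω)
    (hu : 0 < u x) : 0 < truncatedDensity φ u γ x := by
  have hx0 := norm_pos_of_mem_cone hx
  have hΦ := h.homogeneousExtension_pos hx
  unfold truncatedDensity
  positivity

lemma inv_add_inv_inv_le_norm_rpow (h : DirichletEigenpair N Ω lam1 φ) (γ : ℝ) (hx : x ∈ cone N Ω)
    (hu : 0 < u x) : ((‖x‖ ^ γ * homogeneousExtension φ x)⁻¹ + (u x)⁻¹)⁻¹ ≤ ‖x‖ ^ γ := by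
  have hx0 := norm_pos_of_mem_cone hx
  have hΦ := h.homogeneousExtension_pos hx
  calc ((‖x‖ ^ γ * homogeneousExtension φ x)⁻¹ + (u x)⁻¹)⁻¹
      ≤ ‖x‖ ^ γ * homogeneousExtension φ x :=
        inv_le_of_inv_le₀ (by positivity) (le_add_of_nonneg_right (by positivity))
    _ ≤ ‖x‖ ^ γ := mul_le_of_le_one_right (by positivity) (h.homogeneousExtension_le_one hx)

lemma truncatedDensity_le (h : DirichletEigenpair N Ω lam1 φ) (γ : ℝ) (hx : x ∈ cone N Ω)
    (hu : 0 < u x) : truncatedDensity φ u γ x ≤ ‖x‖ ^ (-N : ℝ) := by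
  refine (mul_le_mul_of_nonneg_right (h.inv_add_inv_inv_le_norm_rpow γ hx hu)
    (rpow_nonneg (norm_nonneg x) _)).trans_eq ?_
  rw [← rpow_add (norm_pos_of_mem_cone hx), add_sub_cancel]

lemma truncatedDensity_le_add (h : DirichletEigenpair N Ω lam1 φ) (hρ : 0 < ρ)
    (hp : 0 ≤ p) (hγ : -(p * γ) ≤ N) {k : ℝ} (hk : 0 < k) (hx : x ∈ coneGT N ρ Ω) (hu : 0 < u x) :
    truncatedDensity φ u γ x ≤
      k * ‖x‖ ^ (-N : ℝ) + ρ ^ (-N - p * γ) * k ^ (-p) * u x ^ p := by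
  have hxc := coneGT_subset_cone hρ.le hx
  have hΦ := h.homogeneousExtension_pos hxc
  exact mul_rpow_le_add_mul_rpow hρ hx.1.le hk hp hγ (h.inv_add_inv_inv_le_norm_rpow γ hxc hu)
    (inv_le_of_inv_le₀ hu (le_add_of_nonneg_left (by positivity))) hu.le

lemma continuousOn_truncatedDensity (h : DirichletEigenpair N Ω lam1 φ)
    (hρ : 0 < ρ) (γ : ℝ) (hu : ContinuousOn u (coneGT N ρ Ω))
    (hu0 : ∀ x ∈ coneGT N ρ Ω, 0 < u x) :
    ContinuousOn (truncatedDensity φ u γ) (coneGT N ρ Ω) := by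
  have hnorm (s : ℝ) : ContinuousOn (fun x : Euc N => ‖x‖ ^ s) (coneGT N ρ Ω) :=
    continuous_norm.continuousOn.rpow_const fun x hx => .inl (hρ.trans hx.1).ne'
  have hΦ := (h.continuousOn_homogeneousExtension hρ).mono subset_closure
  have hsum_pos (x : Euc N) (hx : x ∈ coneGT N ρ Ω) :
      0 < ‖x‖ ^ γ * homogeneousExtension φ x ∧
        0 < (‖x‖ ^ γ * homogeneousExtension φ x)⁻¹ + (u x)⁻¹ := by
    have hx0 := hρ.trans hx.1
    have hΦx := h.homogeneousExtension_pos (coneGT_subset_cone hρ.le hx)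
    have hux := hu0 x hx
    exact ⟨by positivity, by positivity⟩
  exact (((((hnorm γ).mul hΦ).inv₀ fun x hx => (hsum_pos x hx).1.ne').add
    (hu.inv₀ fun x hx => (hu0 x hx).ne')).inv₀ fun x hx => (hsum_pos x hx).2.ne').mul (hnorm _)

lemma abs_truncatedDensity_le (h : DirichletEigenpair N Ω lam1 φ) (hρ : 0 < ρ) (γ : ℝ)
    (hu0 : ∀ x ∈ coneGT N ρ Ω, 0 < u x) :
    ∀ x ∈ coneGT N ρ Ω, |truncatedDensity φ u γ x| ≤ ρ ^ (-N : ℝ) := fun x hx => by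
  have hxc := coneGT_subset_cone hρ.le hx
  rw [abs_of_pos (h.truncatedDensity_pos γ hxc (hu0 x hx))]
  exact (h.truncatedDensity_le γ hxc (hu0 x hx)).trans
    (rpow_le_rpow_of_nonpos hρ hx.1.le (neg_nonpos.2 N.cast_nonneg))

lemma setIntegral_truncatedDensity_le_two_mul (h : DirichletEigenpair N Ω lam1 φ)
    (hΩ : Ω ⊆ Metric.sphere (0 : Euc N) 1)
    (hΩo : IsOpen {ω : Metric.sphere (0 : Euc N) 1 | (ω : Euc N) ∈ Ω}) (hρ : 0 < ρ)
    (hγ : γ * (γ + N - 2) = lam1 - μ) (hγ0 : 2 * γ + N - 2 ≤ 0)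
    (hu : IsHardySupersolution μ (coneGT N ρ Ω) u) (hu0 : ∀ x ∈ coneGT N ρ Ω, 0 < u x)
    (hψ : Continuous ψ) (hψ0 : ∀ t, 0 ≤ ψ t) (hρα : ρ < exp α)
    (hψαβ : ∀ t ∉ Icc α β, ψ t = 0) {L : ℝ} (hL : 0 ≤ L) :
    ∫ x in coneGT N ρ Ω, truncatedDensity φ u γ x * homogeneousExtension φ x * ψ (log ‖x‖) ≤
      2 * ∫ x in coneGT N ρ Ω,
        truncatedDensity φ u γ x * homogeneousExtension φ x * ψ (log ‖x‖ - L) := by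
  have hZ0 (x : Euc N) (hx : x ∈ coneGT N ρ Ω) : 0 < ‖x‖ ^ γ * homogeneousExtension φ x :=
    mul_pos (rpow_pos_of_pos (hρ.trans hx.1) γ)
      (h.homogeneousExtension_pos (coneGT_subset_cone hρ.le hx))
  -- `2 - N - γ` is the other root of `a (a + N - 2) = λ₁ - μ`
  refine h.setIntegral_mul_comp_log_norm_le_two_mul (a := 2 - N - γ) hΩ hΩo hρ
    (by linear_combination hγ) (by linarith)
    ((h.isHardySupersolution_norm_rpow_mul_homogeneousExtension hΩo hρ.le hγ).inv_add_inv
      (isOpen_coneGT hΩo hρ.le) hu hZ0 hu0)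
    (fun x hx => (inv_pos.2 (add_pos (inv_pos.2 (hZ0 x hx)) (inv_pos.2 (hu0 x hx)))).le)
    (fun x _ => ?_) (h.continuousOn_truncatedDensity hρ γ hu.contDiffOn.continuousOn hu0)
    (h.abs_truncatedDensity_le hρ γ hu0) hψ hψ0 hρα hψαβ hL
  simp only [truncatedDensity, Pi.inv_apply, Pi.add_apply]
  ring_nf

lemma tendsto_setIntegral_truncatedDensity (h : DirichletEigenpair N Ω lam1 φ)
    (hΩo : IsOpen {ω : Metric.sphere (0 : Euc N) 1 | (ω : Euc N) ∈ Ω}) (hρ : 0 < ρ)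
    (hu0 : ∀ x ∈ coneGT N ρ Ω, 0 < u x) (hp : 0 ≤ p) (hγ : -(p * γ) ≤ N)
    (hup : IntegrableOn (fun x => u x ^ p) (coneGT N ρ Ω))
    (hψ : Continuous ψ) (hψ0 : ∀ t, 0 ≤ ψ t) (hψαβ : ∀ t ∉ Icc α β, ψ t = 0) :
    Tendsto (fun L => ∫ x in coneGT N ρ Ω,
      truncatedDensity φ u γ x * homogeneousExtension φ x * ψ (log ‖x‖ - L)) atTop (𝓝 0) := by
  have hcone := coneGT_subset_cone (Ω := Ω) hρ.le
  refine tendsto_setIntegral_mul_comp_log_norm_sub_of_le (fun x hx => (hcone hx).1)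
    (isOpen_coneGT hΩo hρ.le).measurableSet
    (fun x hx => mul_nonneg (h.truncatedDensity_pos γ (hcone hx) (hu0 x hx)).le
      (h.homogeneousExtension_pos (hcone hx)).le) hup hψ hψ0 hψαβ
    fun k hk => ⟨ρ ^ (-N - p * γ) * k ^ (-p), fun x hx => ?_⟩
  rw [finrank_euclideanSpace_fin]
  exact (mul_le_of_le_one_right (h.truncatedDensity_pos γ (hcone hx) (hu0 x hx)).le
    (h.homogeneousExtension_le_one (hcone hx))).trans
      (h.truncatedDensity_le_add hρ hp hγ hk hx (hu0 x hx))

theorem lt_mul_neg_of_integrableOn_rpow (h : DirichletEigenpair N Ω lam1 φ)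
    (hΩ : Ω ⊆ Metric.sphere (0 : Euc N) 1)
    (hΩo : IsOpen {ω : Metric.sphere (0 : Euc N) 1 | (ω : Euc N) ∈ Ω}) (hρ : 0 < ρ)
    (hγ : γ * (γ + N - 2) = lam1 - μ) (hγ0 : 2 * γ + N - 2 ≤ 0)
    (hu : IsHardySupersolution μ (coneGT N ρ Ω) u) (hu0 : ∀ x ∈ coneGT N ρ Ω, 0 < u x)
    (hp : 0 ≤ p) (hup : IntegrableOn (fun x => u x ^ p) (coneGT N ρ Ω)) : N < p * (-γ) := by
  by_contra! hpγ
  set ψ : ℝ → ℝ := fun t => max (1 - |t - (log ρ + 2)|) 0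
  have hψ : Continuous ψ := by fun_prop
  have hψ0 (t : ℝ) : 0 ≤ ψ t := le_max_right _ _
  have hψ_supp : ∀ t ∉ Icc (log ρ + 1) (log ρ + 3), ψ t = 0 := fun t ht => by
    refine max_eq_right (sub_nonpos.2 (le_of_not_gt fun hlt => ht ?_))
    constructor <;> linarith [abs_lt.1 hlt]
  have hρ_lt : ρ < exp (log ρ + 1) := by
    rw [← log_lt_iff_lt_exp hρ]
    exact lt_add_one _
  have hle := ge_of_tendsto ((h.tendsto_setIntegral_truncatedDensity hΩo hρ hu0 hp (by linarith)
    hup hψ hψ0 hψ_supp).const_mul 2) ((eventually_ge_atTop 0).mono fun L hL =>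
      h.setIntegral_truncatedDensity_le_two_mul hΩ hΩo hρ hγ hγ0 hu hu0 hψ hψ0 hρ_lt hψ_supp hL)
  obtain ⟨ω, hω⟩ := h.nonempty
  have hω1 : ‖ω‖ = 1 := mem_sphere_zero_iff_norm.1 (hΩ hω)
  have hx : exp (log ρ + 2) • ω ∈ coneGT N ρ Ω :=
    smul_mem_coneGT hΩ hω (exp_pos _) (hρ_lt.trans (exp_lt_exp.2 (by linarith)))
  have hcone := coneGT_subset_cone (Ω := Ω) hρ.le
  refine (hle.trans_eq (mul_zero 2)).not_gt (setIntegral_mul_comp_log_norm_pos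
    (isOpen_coneGT hΩo hρ.le) (fun h0 => (hcone h0).1 rfl)
    (fun x hx => mul_pos (h.truncatedDensity_pos γ (hcone hx) (hu0 x hx))
      (h.homogeneousExtension_pos (hcone hx))) hψ hψ0
    (h.integrableOn_mul_homogeneousExtension_mul_comp_log_norm hΩo hρ
      (h.continuousOn_truncatedDensity hρ γ hu.contDiffOn.continuousOn hu0)
      (h.abs_truncatedDensity_le hρ γ hu0) hψ hψ_supp) hx ?_)
  simp [ψ, norm_smul, hω1]

end DirichletEigenpair

/-! ### Existence -/

lemma integrableOn_norm_rpow_neg {E : Type*} [NormedAddCommGroup E] [NormedSpace ℝ E]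
    [FiniteDimensional ℝ E] [MeasurableSpace E] [BorelSpace E] (ν : Measure E)
    [ν.IsAddHaarMeasure] {ρ s : ℝ} (hρ : 0 < ρ) (hs : Module.finrank ℝ E < s) :
    IntegrableOn (fun x : E => ‖x‖ ^ (-s)) {x | ρ < ‖x‖} ν := by
  have hmeas : MeasurableSet {x : E | ρ < ‖x‖} := measurableSet_lt measurable_const measurable_norm
  refine (((integrable_one_add_norm hs).const_mul ((ρ / (1 + ρ)) ^ (-s))).integrableOn).mono'
    (measurable_norm.pow_const _).aestronglyMeasurable
    (ae_restrict_of_forall_mem hmeas fun x (hx : ρ < ‖x‖) => ?_)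
  rw [norm_of_nonneg (rpow_nonneg (norm_nonneg x) _), ← mul_rpow (by positivity) (by positivity)]
  refine rpow_le_rpow_of_nonpos (by positivity) ?_
    (neg_nonpos.2 ((Nat.cast_nonneg _).trans hs.le))
  rw [div_mul_eq_mul_div, div_le_iff₀ (by positivity)]
  nlinarith

lemma exists_pos_rpow_mul_le {s κ : ℝ} (hs : 0 < s) (hκ : 0 < κ) {I : ℝ} (hI : 0 ≤ I) :
    ∃ c > 0, c ^ s * I ≤ κ := by
  refine ⟨(κ / (I + 1)) ^ s⁻¹, by positivity, ?_⟩
  rw [rpow_inv_rpow (by positivity) hs.ne', div_mul_eq_mul_div, div_le_iff₀ (by positivity)]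
  nlinarith

lemma exists_isPosSolZ_of_mul_rpow_le {N : ℕ} {Ω : Set (Euc N)} {μ ρ p q κ : ℝ} {V : Euc N → ℝ}
    (hU : IsOpen (coneGT N ρ Ω)) (hκ : 0 < κ) (hpq : 1 < p + q)
    (hV : ContDiffOn ℝ 2 V (coneGT N ρ Ω)) (hVc : ContinuousOn V (closure (coneGT N ρ Ω)))
    (hV0 : ∀ x ∈ coneGT N ρ Ω, 0 < V x) (hVp : IntegrableOn (fun x => V x ^ p) (coneGT N ρ Ω))
    (hle : ∀ x ∈ coneGT N ρ Ω, κ * V x ^ q ≤ -Δ V x - μ * ‖x‖ ^ (-2 : ℝ) * V x) :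
    ∃ u : Euc N → ℝ, IsPosSolZ N ρ μ p q Ω u := by
  set I := (∫⁻ y in coneGT N ρ Ω, ENNReal.ofReal (V y ^ p)).toReal
  obtain ⟨c, hc, hcI⟩ := exists_pos_rpow_mul_le (sub_pos.2 hpq) hκ
    (ENNReal.toReal_nonneg : 0 ≤ I)
  have hscale : ∫⁻ y in coneGT N ρ Ω, ENNReal.ofReal ((c * V y) ^ p) =
      ENNReal.ofReal (c ^ p) * ∫⁻ y in coneGT N ρ Ω, ENNReal.ofReal (V y ^ p) := by
    rw [← lintegral_const_mul' _ _ ENNReal.ofReal_ne_top]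
    refine setLIntegral_congr_fun hU.measurableSet fun x hx => ?_
    simp only [mul_rpow hc.le (hV0 x hx).le, ENNReal.ofReal_mul (rpow_nonneg hc.le p)]
  have hVp_lt : ∫⁻ y in coneGT N ρ Ω, ENNReal.ofReal (V y ^ p) < ⊤ := hVp.lintegral_lt_top
  refine ⟨fun x => c * V x, contDiffOn_const.mul hV, continuousOn_const.mul hVc,
    fun x hx => mul_pos hc (hV0 x hx), ?_, fun x hx => ?_⟩
  · rw [hscale]
    exact ENNReal.mul_lt_top ENNReal.ofReal_lt_top hVp_lt
  · have hΔ : Δ (fun y => c * V y) x = c * Δ V x :=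
      laplacian_smul c (hV.contDiffAt (hU.mem_nhds hx))
    have hVq := rpow_nonneg (hV0 x hx).le q
    rw [hscale, ENNReal.toReal_mul, ENNReal.toReal_ofReal (by positivity), lap_eq_laplacian, hΔ,
      mul_rpow hc.le (hV0 x hx).le]
    calc c ^ p * I * (c ^ q * V x ^ q) = c * (c ^ (p + q - 1) * I * V x ^ q) := by
          rw [rpow_sub_one hc.ne', rpow_add hc]
          field_simp
      _ ≤ c * (κ * V x ^ q) := by gcongr
      _ ≤ c * (-Δ V x - μ * ‖x‖ ^ (-2 : ℝ) * V x) := by gcongr; exact hle x hx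
      _ = -(c * Δ V x) - μ * ‖x‖ ^ (-2 : ℝ) * (c * V x) := by ring

/-- The homogeneous solution `‖x‖ ^ γ * Φ x` minus `K` times a multiple of faster decay `γ - ε`.
The correction makes it a strict supersolution of the Hardy operator. -/
def perturbedSolution {N : ℕ} (φ : Euc N → ℝ) (γ ε K : ℝ) (x : Euc N) : ℝ :=
  ‖x‖ ^ γ * homogeneousExtension φ x - K * (‖x‖ ^ (γ - ε) * homogeneousExtension φ x)

namespace DirichletEigenpair

variable {N : ℕ} {Ω : Set (Euc N)} {lam1 μ ρ γ ε K p q : ℝ} {φ : Euc N → ℝ} {x : Euc N}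

lemma perturbedSolution_pos (h : DirichletEigenpair N Ω lam1 φ) (hρ : 0 < ρ) (hε : 0 ≤ ε)
    (hK : K < ρ ^ ε) (hx : x ∈ coneGT N ρ Ω) : 0 < perturbedSolution φ γ ε K x := by
  have hx0 : 0 < ‖x‖ := hρ.trans hx.1
  have hK' : K < ‖x‖ ^ ε := hK.trans_le (rpow_le_rpow hρ.le hx.1.le hε)
  have hΦ := h.homogeneousExtension_pos (coneGT_subset_cone hρ.le hx)
  have hfactor : perturbedSolution φ γ ε K x =
      ‖x‖ ^ (γ - ε) * homogeneousExtension φ x * (‖x‖ ^ ε - K) := by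
    rw [perturbedSolution, rpow_sub hx0]
    field_simp
  rw [hfactor]
  exact mul_pos (by positivity) (sub_pos.2 hK')

lemma perturbedSolution_le (h : DirichletEigenpair N Ω lam1 φ) (hK : 0 ≤ K) (hx : x ∈ cone N Ω) :
    perturbedSolution φ γ ε K x ≤ ‖x‖ ^ γ * homogeneousExtension φ x :=
  sub_le_self _ (mul_nonneg hK (mul_nonneg (rpow_nonneg (norm_nonneg x) _)
    (h.homogeneousExtension_pos hx).le))

lemma contDiffOn_perturbedSolution (h : DirichletEigenpair N Ω lam1 φ)
    (hΩo : IsOpen {ω : Metric.sphere (0 : Euc N) 1 | (ω : Euc N) ∈ Ω}) (hρ : 0 ≤ ρ) :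
    ContDiffOn ℝ 2 (perturbedSolution φ γ ε K) (coneGT N ρ Ω) :=
  (h.contDiffOn_norm_rpow_mul_homogeneousExtension hΩo hρ γ).sub
    (contDiffOn_const.mul (h.contDiffOn_norm_rpow_mul_homogeneousExtension hΩo hρ (γ - ε)))

lemma continuousOn_perturbedSolution (h : DirichletEigenpair N Ω lam1 φ) (hρ : 0 < ρ) :
    ContinuousOn (perturbedSolution φ γ ε K) (closure (coneGT N ρ Ω)) := by
  have hterm (a : ℝ) :
      ContinuousOn (fun x => ‖x‖ ^ a * homogeneousExtension φ x) (closure (coneGT N ρ Ω)) :=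
    (continuous_norm.continuousOn.rpow_const fun x hx =>
      .inl (hρ.trans_le (le_norm_of_mem_closure_coneGT hx)).ne').mul
        (h.continuousOn_homogeneousExtension hρ)
  exact (hterm γ).sub (continuousOn_const.mul (hterm (γ - ε)))

lemma neg_laplacian_perturbedSolution_sub (h : DirichletEigenpair N Ω lam1 φ)
    (hΩo : IsOpen {ω : Metric.sphere (0 : Euc N) 1 | (ω : Euc N) ∈ Ω})
    (hγ : γ * (γ + N - 2) = lam1 - μ) (hx : x ∈ cone N Ω) :
    -Δ (perturbedSolution φ γ ε K) x - μ * ‖x‖ ^ (-2 : ℝ) * perturbedSolution φ γ ε K x =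
      K * (ε * (ε - (2 * γ + N - 2))) * (‖x‖ ^ (γ - ε - 2) * homogeneousExtension φ x) := by
  have hcd (a : ℝ) := h.contDiffAt_norm_rpow_mul_homogeneousExtension hΩo a hx
  have hΔ : Δ (perturbedSolution φ γ ε K) x =
      Δ (fun y => ‖y‖ ^ γ * homogeneousExtension φ y) x -
        K * Δ (fun y => ‖y‖ ^ (γ - ε) * homogeneousExtension φ y) x :=
    ((hcd γ).laplacian_sub (contDiffAt_const.mul (hcd (γ - ε)))).trans
      (congrArg _ (laplacian_smul K (hcd (γ - ε))))
  rw [hΔ, h.laplacian_norm_rpow_mul_homogeneousExtension hΩo _ hx,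
    h.laplacian_norm_rpow_mul_homogeneousExtension hΩo _ hx, perturbedSolution,
    sub_eq_add_neg (γ - ε) 2, rpow_add (norm_pos_of_mem_cone hx)]
  linear_combination (K * ‖x‖ ^ (γ - ε) - ‖x‖ ^ γ) * ‖x‖ ^ (-2 : ℝ) *
    homogeneousExtension φ x * hγ

lemma perturbedSolution_rpow_le (h : DirichletEigenpair N Ω lam1 φ) (hρ : 0 < ρ) (hε : 0 ≤ ε)
    (hK0 : 0 ≤ K) (hK : K < ρ ^ ε) (hq : 1 ≤ q) (hx : x ∈ coneGT N ρ Ω) :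
    perturbedSolution φ γ ε K x ^ q ≤ ‖x‖ ^ (γ * q) * homogeneousExtension φ x := by
  have hxc := coneGT_subset_cone hρ.le hx
  have hΦ := h.homogeneousExtension_pos hxc
  calc perturbedSolution φ γ ε K x ^ q ≤ (‖x‖ ^ γ * homogeneousExtension φ x) ^ q :=
        rpow_le_rpow (h.perturbedSolution_pos hρ hε hK hx).le (h.perturbedSolution_le hK0 hxc)
          (by linarith)
    _ = ‖x‖ ^ (γ * q) * homogeneousExtension φ x ^ q := by
        rw [mul_rpow (by positivity) hΦ.le, ← rpow_mul (norm_nonneg x)]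
    _ ≤ ‖x‖ ^ (γ * q) * homogeneousExtension φ x := by
        gcongr
        exact rpow_le_self_of_le_one hΦ.le (h.homogeneousExtension_le_one hxc) hq

lemma integrableOn_perturbedSolution_rpow (h : DirichletEigenpair N Ω lam1 φ)
    (hΩo : IsOpen {ω : Metric.sphere (0 : Euc N) 1 | (ω : Euc N) ∈ Ω}) (hρ : 0 < ρ) (hε : 0 ≤ ε)
    (hK0 : 0 ≤ K) (hK : K < ρ ^ ε) (hp : 0 ≤ p) (hpγ : N < p * (-γ)) :
    IntegrableOn (fun x => perturbedSolution φ γ ε K x ^ p) (coneGT N ρ Ω) := by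
  have hU := (isOpen_coneGT (Ω := Ω) hΩo hρ.le).measurableSet
  have hpow : IntegrableOn (fun x : Euc N => ‖x‖ ^ (-(p * (-γ)))) {x | ρ < ‖x‖} :=
    integrableOn_norm_rpow_neg volume hρ (by rwa [finrank_euclideanSpace_fin])
  have hcont : ContinuousOn (fun x => perturbedSolution φ γ ε K x ^ p) (coneGT N ρ Ω) :=
    ((h.continuousOn_perturbedSolution hρ).mono subset_closure).rpow_const fun _ _ => .inr hp
  refine (hpow.mono_set fun x hx => hx.1).mono' (hcont.aestronglyMeasurable hU)
    (ae_restrict_of_forall_mem hU fun x hx => ?_)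
  have hxc := coneGT_subset_cone hρ.le hx
  have hpos := (h.perturbedSolution_pos (γ := γ) hρ hε hK hx).le
  rw [norm_of_nonneg (rpow_nonneg hpos p), mul_neg, neg_neg, mul_comm p,
    rpow_mul (norm_nonneg x)]
  exact rpow_le_rpow hpos ((h.perturbedSolution_le hK0 hxc).trans
    (mul_le_of_le_one_right (rpow_nonneg (norm_nonneg x) γ) (h.homogeneousExtension_le_one hxc))) hp

theorem exists_isPosSolZ (h : DirichletEigenpair N Ω lam1 φ)
    (hΩo : IsOpen {ω : Metric.sphere (0 : Euc N) 1 | (ω : Euc N) ∈ Ω}) (hρ : 0 < ρ)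
    (hγ : γ * (γ + N - 2) = lam1 - μ) (hγ0 : 2 * γ + N - 2 ≤ 0) (hq : 2 < (q - 1) * (-γ))
    (hp : 0 ≤ p) (hpγ : N < p * (-γ)) : ∃ u : Euc N → ℝ, IsPosSolZ N ρ μ p q Ω u := by
  have hpγ0 : 0 < p * (-γ) := N.cast_nonneg.trans_lt hpγ
  have hγ_neg : 0 < -γ := pos_of_mul_pos_right hpγ0 hp
  have hp0 : 0 < p := pos_of_mul_pos_left hpγ0 hγ_neg.le
  have hq1 : 1 < q := sub_pos.1 (pos_of_mul_pos_left (two_pos.trans hq) hγ_neg.le)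
  obtain ⟨ε, hε, hεq⟩ : ∃ ε > 0, γ - ε - 2 = γ * q :=
    ⟨(q - 1) * (-γ) - 2, sub_pos.2 hq, by ring⟩
  have hρε : 0 < ρ ^ ε := rpow_pos_of_pos hρ ε
  set K := ρ ^ ε / 2
  have hK0 : 0 < K := half_pos hρε
  have hK : K < ρ ^ ε := half_lt_self hρε
  have hκ : 0 < K * (ε * (ε - (2 * γ + N - 2))) := mul_pos hK0 (mul_pos hε (by linarith))
  refine exists_isPosSolZ_of_mul_rpow_le (isOpen_coneGT hΩo hρ.le) hκ (by linarith)
    (h.contDiffOn_perturbedSolution hΩo hρ.le) (h.continuousOn_perturbedSolution hρ)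
    (fun x hx => h.perturbedSolution_pos hρ hε.le hK hx)
    (h.integrableOn_perturbedSolution_rpow hΩo hρ hε.le hK0.le hK hp hpγ) fun x hx => ?_
  rw [h.neg_laplacian_perturbedSolution_sub hΩo hγ (coneGT_subset_cone hρ.le hx), hεq]
  exact mul_le_mul_of_nonneg_left (h.perturbedSolution_rpow_le hρ hε.le hK0.le hK hq1.le hx) hκ.le

end DirichletEigenpair

section IsPosSolZ

variable {N : ℕ} {Ω : Set (Euc N)} {μ ρ p q : ℝ} {u : Euc N → ℝ}

lemma IsPosSolZ.isHardySupersolution (hu : IsPosSolZ N ρ μ p q Ω u) :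
    IsHardySupersolution μ (coneGT N ρ Ω) u where
  contDiffOn := hu.1
  laplacian_nonpos x hx := by
    obtain ⟨-, -, hu0, -, hle⟩ := hu
    have hle_x := (mul_nonneg ENNReal.toReal_nonneg (rpow_nonneg (hu0 x hx).le q)).trans (hle x hx)
    rw [lap_eq_laplacian] at hle_x
    linarith

lemma IsPosSolZ.integrableOn_rpow (hu : IsPosSolZ N ρ μ p q Ω u) (hU : IsOpen (coneGT N ρ Ω)) :
    IntegrableOn (fun x => u x ^ p) (coneGT N ρ Ω) := by
  obtain ⟨hcd, -, hu0, hlt, -⟩ := hu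
  refine ⟨(hcd.continuousOn.rpow_const fun x hx =>
    .inl (hu0 x hx).ne').aestronglyMeasurable hU.measurableSet, ?_⟩
  rwa [hasFiniteIntegral_iff_ofReal (ae_restrict_of_forall_mem hU.measurableSet fun x hx =>
    rpow_nonneg (hu0 x hx).le p)]

end IsPosSolZ

theorem existence_iff_alpha_zero_general {N : ℕ} {Ω : Set (Euc N)}
    (hΩ : Ω ⊆ Metric.sphere (0 : Euc N) 1)
    (hΩo : IsOpen {ω : Metric.sphere (0 : Euc N) 1 | (ω : Euc N) ∈ Ω}) {lam1 : ℝ}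
    {φ : Euc N → ℝ} (hphi : DirichletEigenpair N Ω lam1 φ) {p q ρ μ : ℝ} (hp : 0 ≤ p)
    (hρ : 0 < ρ) (hμ : μ ≤ CHconst N lam1) (hq : 2 < (q - 1) * (-(gammaStar N lam1 μ))) :
    (∃ u : Euc N → ℝ, IsPosSolZ N ρ μ p q Ω u) ↔ (N : ℝ) < p * (-(gammaStar N lam1 μ)) := by
  have hγ := gammaStar_mul_gammaStar_add hμ
  have hγ0 := two_mul_gammaStar_add_le_zero N lam1 μ
  refine ⟨fun ⟨u, hu⟩ => ?_, hphi.exists_isPosSolZ hΩo hρ hγ hγ0 hq hp⟩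
  have hu0 : ∀ x ∈ coneGT N ρ Ω, 0 < u x := hu.2.2.1
  exact hphi.lt_mul_neg_of_integrableOn_rpow hΩ hΩo hρ hγ hγ0 hu.isHardySupersolution hu0 hp
    (hu.integrableOn_rpow (isOpen_coneGT hΩo hρ.le))

/-- for `μ ≤ C_{H,Ω}` and `(q-1)·|γ_*| > 2`, the inequality `(Z)` has a
positive solution in `C_Ω^ρ` iff `p·|γ_*| > N`. -/
theorem existence_iff_alpha_zero
    (N : ℕ) (hN : 2 ≤ N) (Ω : Set (Euc N)) (hΩ : IsConeDomain N Ω)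
    (lam1 : ℝ) (φ : Euc N → ℝ) (hphi : DirichletEigenpair N Ω lam1 φ)
    (p q ρ μ : ℝ) (hp : 0 < p) (hρ : 0 < ρ)
    (hμ : μ ≤ CHconst N lam1)
    (hq : 2 < (q - 1) * (-(gammaStar N lam1 μ))) :
    (∃ u : Euc N → ℝ, IsPosSolZ N ρ μ p q Ω u) ↔
      (N : ℝ) < p * (-(gammaStar N lam1 μ)) :=
  existence_iff_alpha_zero_general hΩ.1 hΩ.2.2 hphi hp.le hρ hμ hq
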